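/- arXiv:2311.01748 — 2 statements merged into one kernel-verified Lean document; each statement's English description precedes it below -/
import Mathlib

section
/- (Strict positivity for α > 1.) Let α > 1 and z > 0, and let ρ, σ be nonzero n×n positive semidefinite complex matrices such that the support of ρ is contained in the support of σ (i.e., σv = 0 implies ρv = 0). Then Q_{α,z}(ρ‖σ) ≥ (Tr ρ)^α · (Tr σ)^{1−α}. Moreover, if (Tr σ) · ρ = (Tr ρ) · σ then equality holds, and if z ≥ α/2 and equality holds then (Tr σ) · ρ = (Tr ρ) · σ. -/
open Matrix
open scoped ComplexOrder

/-- Real power of a positive semidefinite matrix via the spectral decomposition,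
applying `x ^ t` (real `rpow`, so with the convention `0 ^ t = 0` for `t ≠ 0`)
to the eigenvalues; returns `0` if the matrix is not Hermitian. -/
noncomputable def mpow {n : Type*} [Fintype n] [DecidableEq n]
    (A : Matrix n n ℂ) (t : ℝ) : Matrix n n ℂ :=
  if hA : A.IsHermitian then
    (hA.eigenvectorUnitary : Matrix n n ℂ) *
      Matrix.diagonal (fun i => ((hA.eigenvalues i ^ t : ℝ) : ℂ)) *
      star (hA.eigenvectorUnitary : Matrix n n ℂ)
  else 0


/-- The α-z-Rényi quantity `Q_{α,z}(ρ‖σ) = Tr((σ^((1−α)/2z) ρ^(α/z) σ^((1−α)/2z))^z)`. -/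
noncomputable def Qaz {n : Type*} [Fintype n] [DecidableEq n]
    (α z : ℝ) (ρ σ : Matrix n n ℂ) : ℝ :=
  ((mpow (mpow σ ((1 - α) / (2 * z)) * mpow ρ (α / z) * mpow σ ((1 - α) / (2 * z))) z).trace).re

/-!
For `z ≥ 1` put `s = (α - 1) / z`. Klein's inequality
`(1 + r) Tr (M B ^ r) ≤ Tr M ^ (1 + r) + r Tr B ^ (1 + r)`, with `r = z - 1`,
`M = ρ ^ (α / 2z) σ ^ (-s) ρ ^ (α / 2z)` and `B` a multiple of `ρ ^ (1 / z)`, bounds `Q_{α,z}` below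
by the Petz quantity `Tr (ρ ^ (1 + s) σ ^ (-s))`. The latter is a double sum over eigenvalues `x` of
`ρ` and `y` of `σ`, and `x ^ (1 + s) y ^ (-s)` lies above its tangent plane along the ray `x = κ y`,
`κ = Tr ρ / Tr σ`, touching it only on that ray; so equality forces `ρ = κ σ`.

For `z < 1`, `Q_{α,2z} ≤ Q_{α,z}`, and doubling `z` reduces to the first case: `x ^ z` is a positive
mixture of the functions `log (1 + t x)`, which turns the comparison of traces into the determinant
inequality `|det (1 + T²)| ≤ det (1 + Tᴴ T)`.
-/

section Determinant

variable {m n 𝕜 : Type*} [Fintype m] [Fintype n] [DecidableEq n] [RCLike 𝕜]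

theorem cfc_eq_mul_diagonal_mul {A : Matrix n n 𝕜} (hA : A.IsHermitian) (f : ℝ → ℝ) :
    cfc f A = (hA.eigenvectorUnitary : Matrix n n 𝕜) *
      diagonal (fun i => (f (hA.eigenvalues i) : 𝕜)) *
        star (hA.eigenvectorUnitary : Matrix n n 𝕜) := by
  rw [hA.cfc_eq, IsHermitian.cfc, Unitary.conjStarAlgAut_apply]
  rfl

theorem det_cfc {A : Matrix n n 𝕜} (hA : A.IsHermitian) (f : ℝ → ℝ) :
    (cfc f A).det = ((∏ i, f (hA.eigenvalues i) : ℝ) : 𝕜) := by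
  rw [cfc_eq_mul_diagonal_mul hA, det_mul_right_comm,
    Unitary.mul_star_self_of_mem (SetLike.coe_mem _), one_mul, det_diagonal, RCLike.ofReal_prod]

theorem det_one_add_smul_cfc {A : Matrix n n 𝕜} (hA : A.IsHermitian) (f : ℝ → ℝ) (t : ℝ) :
    (1 + t • cfc f A).det = ((∏ i, (1 + t * f (hA.eigenvalues i)) : ℝ) : 𝕜) := by
  have hcont (g : ℝ → ℝ) : ContinuousOn g (spectrum ℝ A) := A.finite_real_spectrum.continuousOn g
  have hcfc : 1 + t • cfc f A = cfc (fun x => 1 + t * f x) A := by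
    rw [cfc_const_add (1 : ℝ) (fun x => t * f x) A (hcont _) hA.isSelfAdjoint,
      cfc_const_mul t f A (hcont f), map_one]
  rw [hcfc, det_cfc hA]

theorem det_one_add_smul {A : Matrix n n 𝕜} (hA : A.IsHermitian) (t : ℝ) :
    (1 + t • A).det = ((∏ i, (1 + t * hA.eigenvalues i) : ℝ) : 𝕜) := by
  simpa only [cfc_id' ℝ A hA.isSelfAdjoint] using det_one_add_smul_cfc hA (fun x => x) t

theorem det_one_add_smul_sq {A : Matrix n n 𝕜} (hA : A.IsHermitian) (t : ℝ) :
    (1 + t • A ^ 2).det = ((∏ i, (1 + t * hA.eigenvalues i ^ 2) : ℝ) : 𝕜) := by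
  rw [← cfc_pow_id (R := ℝ) A 2 hA.isSelfAdjoint, det_one_add_smul_cfc hA]

theorem one_le_det_one_add {S : Matrix n n 𝕜} (hS : S.PosSemidef) : 1 ≤ (1 + S).det := by
  rw [← one_smul ℝ S, det_one_add_smul hS.1]
  exact_mod_cast Finset.one_le_prod
    fun i _ => le_add_of_nonneg_right (mul_nonneg zero_le_one (hS.eigenvalues_nonneg i))

open scoped MatrixOrder in
theorem det_le_det_add {A S : Matrix n n 𝕜} (hA : A.PosSemidef) (hS : S.PosSemidef) :
    A.det ≤ (A + S).det := by
  by_cases hdet : A.det = 0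
  · rw [hdet]
    exact (hA.add hS).det_nonneg
  obtain ⟨C, rfl⟩ := CStarAlgebra.nonneg_iff_eq_star_mul_self.1 hA.nonneg
  simp only [star_eq_conjTranspose] at *
  have hC : IsUnit C.det := isUnit_iff_ne_zero.2 (right_ne_zero_of_mul (det_mul Cᴴ C ▸ hdet))
  have hfactor : Cᴴ * C + S = Cᴴ * (1 + (C⁻¹)ᴴ * S * C⁻¹) * C := by
    have hC' : Cᴴ * (C⁻¹)ᴴ = 1 := by
      rw [← conjTranspose_mul, nonsing_inv_mul C hC, conjTranspose_one]
    rw [mul_add, add_mul, mul_one, ← mul_assoc, ← mul_assoc, hC', one_mul, mul_assoc S,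
      nonsing_inv_mul C hC, mul_one]
  calc (Cᴴ * C).det ≤ (Cᴴ * C).det * (1 + (C⁻¹)ᴴ * S * C⁻¹).det :=
        le_mul_of_one_le_right hA.det_nonneg
          (one_le_det_one_add (hS.conjTranspose_mul_mul_same C⁻¹))
    _ = (Cᴴ * C + S).det := by rw [hfactor, det_mul, det_mul, det_mul]; ring

theorem norm_det_sq_le_of_posSemidef_fromBlocks {A B D : Matrix n n 𝕜} (hA : A.PosDef)
    (h : (fromBlocks A B Bᴴ D).PosSemidef) : ‖B.det‖ ^ 2 ≤ ‖A.det‖ * ‖D.det‖ := by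
  have := hA.isUnit.invertible
  have hSchur : (D - Bᴴ * A⁻¹ * B).PosSemidef := (PosDef.fromBlocks₁₁ B D hA).1 h
  have hcorner : (Bᴴ * A⁻¹ * B).PosSemidef := hA.inv.posSemidef.conjTranspose_mul_mul_same B
  have hle : (Bᴴ * A⁻¹ * B).det ≤ D.det := by
    simpa only [add_sub_cancel] using det_le_det_add hcorner hSchur
  have hnorm : ‖B.det‖ ^ 2 / ‖A.det‖ ≤ ‖D.det‖ := by
    have hle' : ‖(Bᴴ * A⁻¹ * B).det‖ ≤ ‖D.det‖ := by
      rwa [← RCLike.ofReal_le_ofReal (K := 𝕜), RCLike.norm_of_nonneg' hcorner.det_nonneg,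
        RCLike.norm_of_nonneg' (hcorner.det_nonneg.trans hle)]
    convert hle' using 1
    rw [det_mul, det_mul, det_conjTranspose, det_nonsing_inv, norm_mul, norm_mul, norm_star,
      Ring.inverse_eq_inv', norm_inv]
    ring
  rwa [div_le_iff₀' (norm_pos_iff.2 hA.det_pos.ne')] at hnorm

theorem norm_det_one_add_mul_sq_le (A : Matrix n m 𝕜) (B : Matrix m n 𝕜) :
    ‖(1 + A * B).det‖ ^ 2 ≤ ‖(1 + A * Aᴴ).det‖ * ‖(1 + Bᴴ * B).det‖ := by
  apply norm_det_sq_le_of_posSemidef_fromBlocks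
    (PosDef.one.add_posSemidef (posSemidef_self_mul_conjTranspose A))
  have hgram := posSemidef_self_mul_conjTranspose (fromBlocks (1 : Matrix n n 𝕜) A 1 Bᴴ)
  simpa only [fromBlocks_conjTranspose, fromBlocks_multiply, conjTranspose_one,
    conjTranspose_conjTranspose, conjTranspose_add, conjTranspose_mul, mul_one] using hgram

theorem norm_det_one_add_mul_self_le (T : Matrix n n 𝕜) :
    ‖(1 + T * T).det‖ ≤ ‖(1 + Tᴴ * T).det‖ := by
  have h := norm_det_one_add_mul_sq_le T T
  rw [det_one_add_mul_comm T Tᴴ, ← sq ‖(1 + Tᴴ * T).det‖] at h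
  exact (sq_le_sq₀ (norm_nonneg _) (norm_nonneg _)).1 h

theorem norm_det_one_add_smul_sandwich_sq_le {A C : Matrix n n 𝕜} (hA : A.IsHermitian)
    (hC : C.IsHermitian) {t : ℝ} (ht : 0 ≤ t) :
    ‖(1 + t • (C * A * C) ^ 2).det‖ ≤ ‖(1 + t • (C * C * (A * A) * (C * C))).det‖ := by
  set T := √t • (A * (C * C)) with hT
  have hTT : (1 + T * T).det = (1 + t • (C * A * C) ^ 2).det := by
    rw [hT, smul_mul_smul_comm, Real.mul_self_sqrt ht, ← mul_assoc A C C, mul_assoc (A * C) C,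
      ← smul_mul_assoc, det_one_add_mul_comm, mul_smul_comm, sq]
    simp only [mul_assoc]
  have hTstarT : Tᴴ * T = t • (C * C * (A * A) * (C * C)) := by
    rw [hT, conjTranspose_smul, conjTranspose_mul, conjTranspose_mul, hA.eq, hC.eq, star_trivial,
      smul_mul_smul_comm, Real.mul_self_sqrt ht]
    simp only [mul_assoc]
  simpa only [hTT, hTstarT] using norm_det_one_add_mul_self_le T

end Determinant

section LogIntegral

open MeasureTheory Asymptotics Filter Set
open scoped Topology

theorem integrableOn_rpow_mul_log_one_add_mul {z x : ℝ} (hz0 : 0 < z) (hz1 : z < 1)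
    (hx : 0 ≤ x) :
    IntegrableOn (fun t : ℝ => t ^ (-z - 1) * Real.log (1 + t * x)) (Ioi 0) := by
  have hcont : ContinuousOn (fun t : ℝ => Real.log (1 + t * x)) (Ioi 0) := by
    refine ContinuousOn.log (by fun_prop) fun t (ht : 0 < t) => ?_
    positivity
  refine mellin_convergent_of_isBigO_scalar (a := -(z / 2)) (b := -1)
    (hcont.locallyIntegrableOn measurableSet_Ioi) ?_ (by linarith) ?_ (by linarith)
  · refine IsBigO.of_bound ((1 + x) ^ (z / 2) / (z / 2)) ?_
    filter_upwards [eventually_ge_atTop 1] with t ht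
    have : 0 < t := by linarith
    rw [Real.norm_of_nonneg (Real.log_nonneg (by nlinarith)),
      Real.norm_of_nonneg (by positivity), neg_neg]
    calc Real.log (1 + t * x) ≤ (1 + t * x) ^ (z / 2) / (z / 2) :=
          Real.log_le_rpow_div (by positivity) (by positivity)
      _ ≤ ((1 + x) * t) ^ (z / 2) / (z / 2) := by gcongr; nlinarith
      _ = (1 + x) ^ (z / 2) / (z / 2) * t ^ (z / 2) := by
          rw [Real.mul_rpow (by positivity) (by positivity)]; ring
  · refine IsBigO.of_bound x ?_
    filter_upwards [self_mem_nhdsWithin] with t (ht : 0 < t)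
    rw [neg_neg, Real.rpow_one, Real.norm_of_nonneg ht.le,
      Real.norm_of_nonneg (Real.log_nonneg (le_add_of_nonneg_right (by positivity)))]
    linarith [Real.log_le_sub_one_of_pos (show 0 < 1 + t * x by positivity)]

theorem integral_rpow_mul_log_one_add_mul {z x : ℝ} (hz : 0 < z) (hx : 0 ≤ x) :
    ∫ t in Ioi (0 : ℝ), t ^ (-z - 1) * Real.log (1 + t * x) =
      x ^ z * ∫ t in Ioi (0 : ℝ), t ^ (-z - 1) * Real.log (1 + t) := by
  rcases hx.eq_or_lt with rfl | hx
  · simp [Real.zero_rpow hz.ne']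
  calc ∫ t in Ioi (0 : ℝ), t ^ (-z - 1) * Real.log (1 + t * x)
      = ∫ t in Ioi (0 : ℝ), x ^ (z + 1) * ((t * x) ^ (-z - 1) * Real.log (1 + t * x)) := by
        refine setIntegral_congr_fun measurableSet_Ioi fun t (ht : 0 < t) => ?_
        have hcancel : x ^ (z + 1) * x ^ (-z - 1) = 1 := by
          rw [← Real.rpow_add hx, show z + 1 + (-z - 1) = 0 by ring, Real.rpow_zero]
        simp only [Real.mul_rpow ht.le hx.le]
        linear_combination (-(t ^ (-z - 1) * Real.log (1 + t * x))) * hcancel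
    _ = x ^ z * ∫ t in Ioi (0 : ℝ), t ^ (-z - 1) * Real.log (1 + t) := by
        rw [integral_const_mul,
          integral_comp_mul_right_Ioi (fun t => t ^ (-z - 1) * Real.log (1 + t)) 0 hx, zero_mul,
          smul_eq_mul, ← mul_assoc, Real.rpow_add_one hx.ne', mul_inv_cancel_right₀ hx.ne']

theorem integral_rpow_mul_log_one_add_pos {z : ℝ} (hz0 : 0 < z) (hz1 : z < 1) :
    0 < ∫ t in Ioi (0 : ℝ), t ^ (-z - 1) * Real.log (1 + t) := by
  have hpos : ∀ t ∈ Ioi (0 : ℝ), 0 < t ^ (-z - 1) * Real.log (1 + t) := fun t (ht : 0 < t) =>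
    mul_pos (Real.rpow_pos_of_pos ht _) (Real.log_pos (by linarith))
  refine (integral_pos_iff_support_of_nonneg_ae ?_ ?_).2 ?_
  · exact (ae_restrict_mem measurableSet_Ioi).mono fun t ht => (hpos t ht).le
  · simpa only [mul_one, IntegrableOn] using
      integrableOn_rpow_mul_log_one_add_mul hz0 hz1 zero_le_one
  · refine lt_of_lt_of_le ?_ (measure_mono fun t ht => (hpos t ht).ne')
    simp

theorem sum_rpow_le_sum_rpow_of_prod_one_add_mul_le {ι κ : Type*} [Fintype ι] [Fintype κ]
    {z : ℝ} (hz0 : 0 < z) (hz1 : z < 1) {x : ι → ℝ} {y : κ → ℝ}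
    (hx : ∀ i, 0 ≤ x i) (hy : ∀ j, 0 ≤ y j)
    (h : ∀ t : ℝ, 0 < t → ∏ i, (1 + t * x i) ≤ ∏ j, (1 + t * y j)) :
    ∑ i, x i ^ z ≤ ∑ j, y j ^ z := by
  have hintx i := integrableOn_rpow_mul_log_one_add_mul hz0 hz1 (hx i)
  have hinty j := integrableOn_rpow_mul_log_one_add_mul hz0 hz1 (hy j)
  refine le_of_mul_le_mul_right ?_ (integral_rpow_mul_log_one_add_pos hz0 hz1)
  simp_rw [Finset.sum_mul, ← integral_rpow_mul_log_one_add_mul hz0 (hx _),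
    ← integral_rpow_mul_log_one_add_mul hz0 (hy _)]
  rw [← integral_finsetSum _ fun i _ => hintx i, ← integral_finsetSum _ fun j _ => hinty j]
  refine setIntegral_mono_on (integrable_finsetSum _ fun i _ => hintx i)
    (integrable_finsetSum _ fun j _ => hinty j) measurableSet_Ioi fun t (ht : 0 < t) => ?_
  have hposx i : 0 < 1 + t * x i := add_pos_of_pos_of_nonneg one_pos (mul_nonneg ht.le (hx i))
  have hposy j : 0 < 1 + t * y j := add_pos_of_pos_of_nonneg one_pos (mul_nonneg ht.le (hy j))
  rw [← Finset.mul_sum, ← Finset.mul_sum, ← Real.log_prod fun i _ => (hposx i).ne',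
    ← Real.log_prod fun j _ => (hposy j).ne']
  exact mul_le_mul_of_nonneg_left
    (Real.log_le_log (Finset.prod_pos fun i _ => hposx i) (h t ht)) (Real.rpow_nonneg ht.le _)

end LogIntegral

section Young

variable {s x y : ℝ}

theorem one_add_mul_rpow_lt (hs : 0 < s) (hx : 0 ≤ x) (hy : 0 ≤ y) (hxy : x ≠ y) :
    (1 + s) * x * y ^ s < x ^ (1 + s) + s * y ^ (1 + s) := by
  rcases hy.eq_or_lt with rfl | hy
  · rw [Real.zero_rpow hs.ne', Real.zero_rpow (by linarith), mul_zero, mul_zero, add_zero]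
    exact Real.rpow_pos_of_pos (lt_of_le_of_ne hx hxy.symm) _
  have hbern : 1 + (1 + s) * (x / y - 1) < (x / y) ^ (1 + s) := by
    have h := one_add_mul_self_lt_rpow_one_add (by linarith [div_nonneg hx hy.le] : -1 ≤ x / y - 1)
      (sub_ne_zero.2 fun h => hxy ((div_eq_one_iff_eq hy.ne').1 h)) (lt_add_of_pos_right 1 hs)
    rwa [add_sub_cancel] at h
  rw [Real.div_rpow hx hy.le, lt_div_iff₀ (by positivity), Real.rpow_one_add' hy.le (by linarith)]
    at hbern
  rw [Real.rpow_one_add' hy.le (by linarith)]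
  have hexpand : (1 + (1 + s) * (x / y - 1)) * (y * y ^ s) =
      (1 + s) * x * y ^ s - s * (y * y ^ s) := by
    field_simp
    ring
  linarith

theorem one_add_mul_rpow_le (hs : 0 ≤ s) (hx : 0 ≤ x) (hy : 0 ≤ y) :
    (1 + s) * x * y ^ s ≤ x ^ (1 + s) + s * y ^ (1 + s) := by
  rcases hs.eq_or_lt with rfl | hs
  · simp
  rcases eq_or_ne x y with rfl | hxy
  · rw [Real.rpow_one_add' hx (by linarith)]
    exact le_of_eq (by ring)
  · exact (one_add_mul_rpow_lt hs hx hy hxy).le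

theorem rpow_mul_rpow_neg_sub_tangent (hx : 0 ≤ x) (hy : 0 < y) (κ : ℝ) :
    x ^ (1 + s) * y ^ (-s) - ((1 + s) * κ ^ s * x - s * κ ^ (1 + s) * y) =
      y * ((x / y) ^ (1 + s) + s * κ ^ (1 + s) - (1 + s) * (x / y) * κ ^ s) := by
  rw [Real.div_rpow hx hy.le, Real.rpow_add hy, Real.rpow_one, Real.rpow_neg hy.le]
  field_simp
  ring

theorem tangent_le_rpow_mul_rpow_neg (hs : 0 ≤ s) {κ : ℝ} (hκ : 0 ≤ κ) (hx : 0 ≤ x)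
    (hy : 0 < y) : (1 + s) * κ ^ s * x - s * κ ^ (1 + s) * y ≤ x ^ (1 + s) * y ^ (-s) := by
  rw [← sub_nonneg, rpow_mul_rpow_neg_sub_tangent hx hy]
  exact mul_nonneg hy.le (sub_nonneg.2 (one_add_mul_rpow_le hs (div_nonneg hx hy.le) hκ))

theorem tangent_lt_rpow_mul_rpow_neg (hs : 0 < s) {κ : ℝ} (hκ : 0 ≤ κ) (hx : 0 ≤ x)
    (hy : 0 < y) (hxy : x ≠ κ * y) :
    (1 + s) * κ ^ s * x - s * κ ^ (1 + s) * y < x ^ (1 + s) * y ^ (-s) := by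
  rw [← sub_pos, rpow_mul_rpow_neg_sub_tangent hx hy]
  exact mul_pos hy (sub_pos.2 (one_add_mul_rpow_lt hs (div_nonneg hx hy.le) hκ
    fun h => hxy ((div_eq_iff hy.ne').1 h)))

end Young

section Overlap

variable {n 𝕜 : Type*} [Fintype n] [DecidableEq n] [RCLike 𝕜]

theorem re_trace_cfc {A : Matrix n n 𝕜} (hA : A.IsHermitian) (f : ℝ → ℝ) :
    RCLike.re (cfc f A).trace = ∑ i, f (hA.eigenvalues i) := by
  rw [cfc_eq_mul_diagonal_mul hA, trace_mul_cycle, Unitary.coe_star_mul_self, one_mul,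
    trace_diagonal, map_sum]
  simp only [RCLike.ofReal_re]

variable {A B : Matrix n n 𝕜}

/-- The transition weights `‖⟪uᵢ, vⱼ⟫‖²` between the eigenbases `u` of `A` and `v` of `B`
(Nussbaum–Szkoła): they turn the trace of `f(A) g(B)` into a double sum over eigenvalues. -/
noncomputable def overlap (hA : A.IsHermitian) (hB : B.IsHermitian) (i j : n) : ℝ :=
  ‖(star (hA.eigenvectorUnitary : Matrix n n 𝕜) * (hB.eigenvectorUnitary : Matrix n n 𝕜)) i j‖ ^ 2

variable (hA : A.IsHermitian) (hB : B.IsHermitian)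

theorem overlap_nonneg (i j : n) : 0 ≤ overlap hA hB i j := sq_nonneg _

theorem re_trace_cfc_mul_cfc (f g : ℝ → ℝ) :
    RCLike.re (cfc f A * cfc g B).trace =
      ∑ i, ∑ j, overlap hA hB i j * (f (hA.eigenvalues i) * g (hB.eigenvalues j)) := by
  rw [cfc_eq_mul_diagonal_mul hA, cfc_eq_mul_diagonal_mul hB]
  simp only [overlap]
  set U := (hA.eigenvectorUnitary : Matrix n n 𝕜)
  set V := (hB.eigenvectorUnitary : Matrix n n 𝕜)
  set D := diagonal fun i => (f (hA.eigenvalues i) : 𝕜)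
  set E := diagonal fun i => (g (hB.eigenvalues i) : 𝕜)
  have hcycle : (U * D * star U * (V * E * star V)).trace =
      (D * (star U * V) * E * (star U * V)ᴴ).trace := by
    rw [← star_eq_conjTranspose, star_mul, star_star, mul_assoc U, mul_assoc U, trace_mul_comm U]
    simp only [mul_assoc]
  rw [hcycle, trace, map_sum]
  refine Finset.sum_congr rfl fun i _ => ?_
  rw [diag_apply, mul_apply, map_sum]
  refine Finset.sum_congr rfl fun j _ => ?_
  rw [mul_diagonal, diagonal_mul, conjTranspose_apply, ← RCLike.ofReal_re (K := 𝕜) (_ * _)]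
  congr 1
  push_cast
  rw [← RCLike.mul_conj, RCLike.star_def]
  ring

theorem re_trace_cfc_eq_sum_overlap_left (f : ℝ → ℝ) :
    RCLike.re (cfc f A).trace = ∑ i, ∑ j, overlap hA hB i j * f (hA.eigenvalues i) := by
  simpa only [cfc_one ℝ B hB.isSelfAdjoint, mul_one, Pi.one_apply] using
    re_trace_cfc_mul_cfc hA hB f 1

theorem re_trace_cfc_eq_sum_overlap_right (g : ℝ → ℝ) :
    RCLike.re (cfc g B).trace = ∑ i, ∑ j, overlap hA hB i j * g (hB.eigenvalues j) := by
  simpa only [cfc_one ℝ A hA.isSelfAdjoint, one_mul, Pi.one_apply] using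
    re_trace_cfc_mul_cfc hA hB 1 g

variable {hA hB}

theorem cfc_eq_cfc_of_overlap {f g : ℝ → ℝ}
    (h : ∀ i j, overlap hA hB i j ≠ 0 → f (hA.eigenvalues i) = g (hB.eigenvalues j)) :
    cfc f A = cfc g B := by
  rw [cfc_eq_mul_diagonal_mul hA, cfc_eq_mul_diagonal_mul hB]
  simp only [overlap, ne_eq, sq_eq_zero_iff, norm_eq_zero] at h
  set U := (hA.eigenvectorUnitary : Matrix n n 𝕜)
  set V := (hB.eigenvectorUnitary : Matrix n n 𝕜)
  set D := diagonal fun i => (f (hA.eigenvalues i) : 𝕜)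
  set E := diagonal fun i => (g (hB.eigenvalues i) : 𝕜)
  have hUU : U * star U = 1 := Unitary.mul_star_self_of_mem (SetLike.coe_mem _)
  have hVV : V * star V = 1 := Unitary.mul_star_self_of_mem (SetLike.coe_mem _)
  have hintertwine : D * (star U * V) = star U * V * E := by
    ext i j
    rw [diagonal_mul, mul_diagonal]
    by_cases hW : (star U * V) i j = 0
    · rw [hW, mul_zero, zero_mul]
    · rw [h i j hW, mul_comm]
  calc U * D * star U = U * (D * (star U * V)) * star V := by
        simp only [mul_assoc, hVV, mul_one]
    _ = V * E * star V := by
        simp only [hintertwine, ← mul_assoc, hUU, one_mul]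

theorem eigenvalues_eq_zero_of_overlap_ne_zero (hker : ∀ v, B *ᵥ v = 0 → A *ᵥ v = 0) {i j : n}
    (hij : overlap hA hB i j ≠ 0) (hj : hB.eigenvalues j = 0) : hA.eigenvalues i = 0 := by
  set u := (hA.eigenvectorBasis i).ofLp
  set v := (hB.eigenvectorBasis j).ofLp with hv
  have hAv : A *ᵥ v = 0 := hker v (by rw [hv, hB.mulVec_eigenvectorBasis, hj, zero_smul])
  have hAu : star u ᵥ* A = hA.eigenvalues i • star u := by
    simpa only [star_mulVec, hA.eq, star_smul, star_trivial] using
      congrArg star (hA.mulVec_eigenvectorBasis i)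
  have huv : star u ⬝ᵥ v ≠ 0 := fun h0 => hij (by
    rw [overlap, sq_eq_zero_iff, norm_eq_zero]
    exact h0)
  have horth : hA.eigenvalues i • (star u ⬝ᵥ v) = 0 := by
    rw [← smul_dotProduct, ← hAu, ← dotProduct_mulVec, hAv, dotProduct_zero]
  exact (smul_eq_zero.1 horth).resolve_right huv

end Overlap

section Power

variable {n : Type*} [Fintype n] {A B X Y : Matrix n n ℂ}

theorem coe_re_trace (hA : A.IsHermitian) : ((A.trace.re : ℝ) : ℂ) = A.trace := by
  rw [← Complex.conj_eq_iff_re, starRingEnd_apply, ← trace_conjTranspose, hA.eq]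

theorem re_trace_pos (hA : A.PosSemidef) (hA0 : A ≠ 0) : 0 < A.trace.re :=
  (Complex.pos_iff.1 (hA.trace_nonneg.lt_of_ne' (mt hA.trace_eq_zero_iff.1 hA0))).1

theorem trace_smul_eq_trace_smul_iff (hA : A.IsHermitian) (hB : B.IsHermitian)
    (h : B.trace.re ≠ 0) :
    B.trace • A = A.trace • B ↔ A = (A.trace.re / B.trace.re) • B := by
  rw [← coe_re_trace hA, ← coe_re_trace hB, Complex.coe_smul, Complex.coe_smul,
    ← eq_inv_smul_iff₀ h, smul_smul, Complex.ofReal_re, Complex.ofReal_re, div_eq_inv_mul]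

variable [DecidableEq n]

theorem mpow_eq_cfc (hA : A.IsHermitian) (t : ℝ) : mpow A t = cfc (fun x : ℝ => x ^ t) A := by
  rw [mpow, dif_pos hA, cfc_eq_mul_diagonal_mul hA]
  rfl

theorem isHermitian_mpow (hA : A.IsHermitian) (t : ℝ) : (mpow A t).IsHermitian := by
  rw [mpow_eq_cfc hA]
  exact cfc_predicate _ A

open scoped MatrixOrder in
theorem posSemidef_mpow (hA : A.PosSemidef) (t : ℝ) : (mpow A t).PosSemidef := by
  rw [mpow_eq_cfc hA.1, ← nonneg_iff_posSemidef]
  exact cfc_nonneg fun x hx => Real.rpow_nonneg (spectrum_nonneg_of_nonneg hA.nonneg hx) t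

theorem mpow_one (hA : A.IsHermitian) : mpow A 1 = A := by
  simp only [mpow_eq_cfc hA, Real.rpow_one, cfc_id' ℝ A hA.isSelfAdjoint]

open scoped MatrixOrder in
theorem mpow_mul_mpow (hA : A.PosSemidef) {s t : ℝ} (hst : s + t ≠ 0) :
    mpow A s * mpow A t = mpow A (s + t) := by
  rw [mpow_eq_cfc hA.1, mpow_eq_cfc hA.1, mpow_eq_cfc hA.1,
    ← cfc_mul _ _ A (A.finite_real_spectrum.continuousOn _) (A.finite_real_spectrum.continuousOn _)]
  exact cfc_congr fun x hx =>
    (Real.rpow_add' (spectrum_nonneg_of_nonneg hA.nonneg hx) hst).symm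

open scoped MatrixOrder in
theorem mpow_smul_mpow (hA : A.PosSemidef) {c : ℝ} (hc : 0 ≤ c) (s t : ℝ) :
    mpow (c • mpow A s) t = c ^ t • mpow A (s * t) := by
  have hcont (g : ℝ → ℝ) : ContinuousOn g (spectrum ℝ A) := A.finite_real_spectrum.continuousOn g
  have himage (g : ℝ → ℝ) : (g '' spectrum ℝ A).Finite := A.finite_real_spectrum.image g
  rw [mpow_eq_cfc ((posSemidef_mpow hA s).smul hc).1, mpow_eq_cfc hA.1, mpow_eq_cfc hA.1,
    ← cfc_const_mul c _ A (hcont _), ← cfc_const_mul (c ^ t) _ A (hcont _),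
    ← cfc_comp' _ _ A ((himage _).continuousOn _) (hcont _) hA.1.isSelfAdjoint]
  refine cfc_congr fun x hx => ?_
  have hx0 : 0 ≤ x := spectrum_nonneg_of_nonneg hA.nonneg hx
  simp only [Real.mul_rpow hc (Real.rpow_nonneg hx0 s), Real.rpow_mul hx0]

theorem re_trace_mpow (hA : A.IsHermitian) (t : ℝ) :
    (mpow A t).trace.re = ∑ i, hA.eigenvalues i ^ t := by
  rw [mpow_eq_cfc hA]
  exact re_trace_cfc hA _

theorem re_trace_mpow_mul_comm (hXY : (X * Y).IsHermitian) (hYX : (Y * X).IsHermitian) (t : ℝ) :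
    (mpow (X * Y) t).trace.re = (mpow (Y * X) t).trace.re := by
  rw [re_trace_mpow hXY, re_trace_mpow hYX,
    (hXY.eigenvalues_eq_eigenvalues_iff hYX).2 (charpoly_mul_comm X Y)]

end Power

section Klein

variable {n : Type*} [Fintype n] [DecidableEq n] {A B : Matrix n n ℂ}

theorem re_trace_mpow_mul_mpow (hA : A.IsHermitian) (hB : B.IsHermitian) (s t : ℝ) :
    (mpow A s * mpow B t).trace.re =
      ∑ i, ∑ j, overlap hA hB i j * (hA.eigenvalues i ^ s * hB.eigenvalues j ^ t) := by
  rw [mpow_eq_cfc hA, mpow_eq_cfc hB]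
  exact re_trace_cfc_mul_cfc hA hB _ _

theorem re_trace_mpow_linear_combination (hA : A.IsHermitian) (hB : B.IsHermitian)
    (a b s t : ℝ) :
    a * (mpow A s).trace.re + b * (mpow B t).trace.re =
      ∑ i, ∑ j, overlap hA hB i j * (a * hA.eigenvalues i ^ s + b * hB.eigenvalues j ^ t) := by
  have hleft := re_trace_cfc_eq_sum_overlap_left hA hB fun x => x ^ s
  have hright := re_trace_cfc_eq_sum_overlap_right hA hB fun x => x ^ t
  rw [← mpow_eq_cfc hA, RCLike.re_eq_complex_re] at hleft
  rw [← mpow_eq_cfc hB, RCLike.re_eq_complex_re] at hright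
  rw [hleft, hright]
  simp only [Finset.mul_sum, ← Finset.sum_add_distrib]
  exact Finset.sum_congr rfl fun i _ => Finset.sum_congr rfl fun j _ => by ring

theorem one_add_mul_re_trace_mul_mpow_le (hA : A.PosSemidef) (hB : B.PosSemidef) {s : ℝ}
    (hs : 0 ≤ s) :
    (1 + s) * (A * mpow B s).trace.re ≤
      (mpow A (1 + s)).trace.re + s * (mpow B (1 + s)).trace.re := by
  have hleft := re_trace_mpow_mul_mpow hA.1 hB.1 1 s
  have hright := re_trace_mpow_linear_combination hA.1 hB.1 1 s (1 + s) (1 + s)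
  simp only [one_mul, Real.rpow_one, mpow_one hA.1] at hleft hright
  rw [hleft, hright]
  simp only [Finset.mul_sum]
  refine Finset.sum_le_sum fun i _ => Finset.sum_le_sum fun j _ => ?_
  rw [mul_left_comm, ← mul_assoc (1 + s)]
  exact mul_le_mul_of_nonneg_left
    (one_add_mul_rpow_le hs (hA.eigenvalues_nonneg i) (hB.eigenvalues_nonneg j))
    (overlap_nonneg ..)

end Klein

section Petz

variable {n : Type*} [Fintype n] [DecidableEq n] {ρ σ : Matrix n n ℂ} {s κ : ℝ}

theorem overlap_mul_tangent_le (hρ : ρ.PosSemidef) (hσ : σ.PosSemidef)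
    (hker : ∀ v, σ *ᵥ v = 0 → ρ *ᵥ v = 0) (hs : 0 < s) (hκ : 0 ≤ κ) (i j : n) :
    overlap hρ.1 hσ.1 i j *
        ((1 + s) * κ ^ s * hρ.1.eigenvalues i - s * κ ^ (1 + s) * hσ.1.eigenvalues j) ≤
      overlap hρ.1 hσ.1 i j * (hρ.1.eigenvalues i ^ (1 + s) * hσ.1.eigenvalues j ^ (-s)) := by
  by_cases hij : overlap hρ.1 hσ.1 i j = 0
  · rw [hij, zero_mul, zero_mul]
  refine mul_le_mul_of_nonneg_left ?_ (overlap_nonneg ..)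
  rcases (hσ.eigenvalues_nonneg j).eq_or_lt with hj | hj
  · rw [eigenvalues_eq_zero_of_overlap_ne_zero hker hij hj.symm, ← hj,
      Real.zero_rpow (by linarith)]
    simp only [mul_zero, sub_zero, zero_mul, le_refl]
  · exact tangent_le_rpow_mul_rpow_neg hs.le hκ (hρ.eigenvalues_nonneg i) hj

theorem re_trace_tangent (hρ : ρ.IsHermitian) (hσ : σ.IsHermitian) (a b : ℝ) :
    a * ρ.trace.re - b * σ.trace.re =
      ∑ i, ∑ j, overlap hρ hσ i j * (a * hρ.eigenvalues i - b * hσ.eigenvalues j) := by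
  simpa only [mpow_one hρ, mpow_one hσ, Real.rpow_one, neg_mul, ← sub_eq_add_neg] using
    re_trace_mpow_linear_combination hρ hσ a (-b) 1 1

theorem tangent_le_re_trace_mpow_mul_mpow_neg (hρ : ρ.PosSemidef) (hσ : σ.PosSemidef)
    (hker : ∀ v, σ *ᵥ v = 0 → ρ *ᵥ v = 0) (hs : 0 < s) (hκ : 0 ≤ κ) :
    (1 + s) * κ ^ s * ρ.trace.re - s * κ ^ (1 + s) * σ.trace.re ≤
      (mpow ρ (1 + s) * mpow σ (-s)).trace.re := by
  rw [re_trace_tangent hρ.1 hσ.1, re_trace_mpow_mul_mpow hρ.1 hσ.1]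
  exact Finset.sum_le_sum fun i _ => Finset.sum_le_sum fun j _ =>
    overlap_mul_tangent_le hρ hσ hker hs hκ i j

theorem eq_smul_of_re_trace_mpow_mul_mpow_neg_eq (hρ : ρ.PosSemidef) (hσ : σ.PosSemidef)
    (hker : ∀ v, σ *ᵥ v = 0 → ρ *ᵥ v = 0) (hs : 0 < s) (hκ : 0 ≤ κ)
    (heq : (mpow ρ (1 + s) * mpow σ (-s)).trace.re =
      (1 + s) * κ ^ s * ρ.trace.re - s * κ ^ (1 + s) * σ.trace.re) :
    ρ = κ • σ := by
  rw [re_trace_tangent hρ.1 hσ.1, re_trace_mpow_mul_mpow hρ.1 hσ.1] at heq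
  have hle := overlap_mul_tangent_le hρ hσ hker hs hκ
  have hrow := (Finset.sum_eq_sum_iff_of_le
    fun i _ => Finset.sum_le_sum fun j _ => hle i j).1 heq.symm
  have hterm i j := (Finset.sum_eq_sum_iff_of_le fun j _ => hle i j).1
    (hrow i (Finset.mem_univ i)) j (Finset.mem_univ j)
  rw [← cfc_id' ℝ ρ hρ.1.isSelfAdjoint, ← cfc_const_mul_id κ σ hσ.1.isSelfAdjoint]
  refine cfc_eq_cfc_of_overlap (hA := hρ.1) (hB := hσ.1) fun i j hij => ?_
  rcases (hσ.eigenvalues_nonneg j).eq_or_lt with hj | hj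
  · rw [eigenvalues_eq_zero_of_overlap_ne_zero hker hij hj.symm, ← hj, mul_zero]
  · by_contra hne
    exact (tangent_lt_rpow_mul_rpow_neg hs hκ (hρ.eigenvalues_nonneg i) hj hne).ne
      (mul_left_cancel₀ hij (hterm i j))

end Petz

section LargeOrder

variable {n : Type*} [Fintype n] [DecidableEq n] {ρ σ : Matrix n n ℂ} {α z : ℝ}

theorem Qaz_eq_re_trace_mpow_sandwich (hρ : ρ.PosSemidef) (hσ : σ.PosSemidef) (hα0 : 0 < α)
    (hα1 : α ≠ 1) (hz : 0 < z) :
    Qaz α z ρ σ =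
      (mpow (mpow ρ (α / (2 * z)) * mpow σ (-((α - 1) / z)) *
        mpow ρ (α / (2 * z))) z).trace.re := by
  set A := mpow ρ (α / (2 * z))
  set S := mpow σ ((1 - α) / (2 * z))
  have hA : A.IsHermitian := isHermitian_mpow hρ.1 _
  have hS : S.IsHermitian := isHermitian_mpow hσ.1 _
  have hAA : mpow ρ (α / z) = A * A := by
    rw [mpow_mul_mpow hρ (by positivity)]
    ring_nf
  have hSS : mpow σ (-((α - 1) / z)) = S * S := by
    have hexp : (1 - α) / (2 * z) + (1 - α) / (2 * z) = -((α - 1) / z) := by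
      field_simp
      ring
    have hne : -((α - 1) / z) ≠ 0 := neg_ne_zero.2 (div_ne_zero (sub_ne_zero.2 hα1) hz.ne')
    rw [mpow_mul_mpow hσ (by rwa [hexp]), hexp]
  have hsplit (X Y : Matrix n n ℂ) : X * (Y * Y) * X = X * Y * (Y * X) := by
    simp only [mul_assoc]
  have hherm {X Y : Matrix n n ℂ} (hX : X.IsHermitian) (hY : Y.IsHermitian) :
      (X * Y * (Y * X)).IsHermitian := by
    rw [IsHermitian, conjTranspose_mul, conjTranspose_mul, conjTranspose_mul, hX.eq, hY.eq]
  rw [Qaz, hAA, hSS, hsplit, hsplit]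
  exact re_trace_mpow_mul_comm (hherm hS hA) (hherm hA hS) z

theorem trace_mpow_mul_mul_mpow_mul_mpow (hρ : ρ.PosSemidef) (N : Matrix n n ℂ) {a b : ℝ}
    (ha : 0 < a) (hb : 0 ≤ b) :
    (mpow ρ a * N * mpow ρ a * mpow ρ b).trace = (mpow ρ (2 * a + b) * N).trace := by
  have hab : a + b ≠ 0 := by positivity
  have hsum : a + b + a ≠ 0 := by positivity
  rw [mul_assoc, mpow_mul_mpow hρ hab, trace_mul_comm, ← mul_assoc, mpow_mul_mpow hρ hsum]
  ring_nf

theorem mul_re_trace_mpow_mul_mpow_neg_sub_le_Qaz_sub (hρ : ρ.PosSemidef) (hσ : σ.PosSemidef)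
    (hα0 : 0 < α) (hα1 : α ≠ 1) (hz : 1 ≤ z) {c : ℝ} (hc : 0 ≤ c) :
    z * c ^ (z - 1) *
        ((mpow ρ (1 + (α - 1) / z) * mpow σ (-((α - 1) / z))).trace.re - c * ρ.trace.re) ≤
      Qaz α z ρ σ - c ^ z * ρ.trace.re := by
  have hz0 : 0 < z := by linarith
  have hz1 : 0 ≤ z - 1 := sub_nonneg.2 hz
  have hsandwich : (mpow ρ (α / (2 * z)) * mpow σ (-((α - 1) / z)) *
      mpow ρ (α / (2 * z))).PosSemidef := by
    simpa only [(isHermitian_mpow hρ.1 (α / (2 * z))).eq] using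
      (posSemidef_mpow hσ (-((α - 1) / z))).conjTranspose_mul_mul_same (mpow ρ (α / (2 * z)))
  have hexp : 2 * (α / (2 * z)) + 1 / z * (z - 1) = 1 + (α - 1) / z := by
    field_simp
    ring
  have hklein := one_add_mul_re_trace_mul_mpow_le hsandwich
    ((posSemidef_mpow hρ (1 / z)).smul hc) hz1
  rw [add_sub_cancel, mpow_smul_mpow hρ hc, mpow_smul_mpow hρ hc, one_div_mul_cancel hz0.ne',
    mpow_one hρ.1, mul_smul_comm, trace_smul, trace_smul,
    trace_mpow_mul_mul_mpow_mul_mpow hρ _ (by positivity) (by positivity), hexp,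
    Complex.smul_re, Complex.smul_re,
    ← Qaz_eq_re_trace_mpow_sandwich hρ hσ hα0 hα1 hz0] at hklein
  have hcz : c ^ z = c ^ (z - 1) * c := by
    rw [← Real.rpow_add_one' hc (by linarith), sub_add_cancel]
  rw [hcz, smul_eq_mul, smul_eq_mul] at hklein
  rw [hcz]
  linarith

theorem rpow_mul_re_trace_le_Qaz (hρ : ρ.PosSemidef) (hσ : σ.PosSemidef)
    (hker : ∀ v, σ *ᵥ v = 0 → ρ *ᵥ v = 0) (hα : 1 < α) (hz : 1 ≤ z) {κ : ℝ} (hκ : 0 ≤ κ)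
    (htr : ρ.trace.re = κ * σ.trace.re) :
    κ ^ (α - 1) * ρ.trace.re ≤ Qaz α z ρ σ ∧
      (Qaz α z ρ σ = κ ^ (α - 1) * ρ.trace.re → ρ = κ • σ) := by
  have hz0 : 0 < z := by linarith
  set s := (α - 1) / z with hs
  have hs0 : 0 < s := div_pos (sub_pos.2 hα) hz0
  have hκz : (κ ^ s) ^ z = κ ^ (α - 1) := by
    rw [← Real.rpow_mul hκ, hs, div_mul_cancel₀ _ hz0.ne']
  have htangent : (1 + s) * κ ^ s * ρ.trace.re - s * κ ^ (1 + s) * σ.trace.re =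
      κ ^ s * ρ.trace.re := by
    rw [Real.rpow_one_add' hκ (by positivity), htr]
    ring
  have hpetz := tangent_le_re_trace_mpow_mul_mpow_neg hρ hσ hker hs0 hκ
  have hklein := mul_re_trace_mpow_mul_mpow_neg_sub_le_Qaz_sub hρ hσ (by positivity) hα.ne' hz
    (Real.rpow_nonneg hκ s)
  rw [htangent, ← sub_nonneg] at hpetz
  rw [hκz] at hklein
  refine ⟨sub_nonneg.1 (le_trans (by positivity) hklein), fun heq => ?_⟩
  rcases hκ.eq_or_lt with rfl | hκ0
  · rw [zero_smul, ← hρ.trace_eq_zero_iff, ← coe_re_trace hρ.1, htr, zero_mul, Complex.ofReal_zero]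
  · rw [heq, sub_self] at hklein
    have hD := le_antisymm (nonpos_of_mul_nonpos_right hklein (by positivity)) hpetz
    exact eq_smul_of_re_trace_mpow_mul_mpow_neg_eq hρ hσ hker hs0 hκ
      ((sub_eq_zero.1 hD).trans htangent.symm)

end LargeOrder

section Doubling

variable {n : Type*} [Fintype n] [DecidableEq n]

theorem re_trace_mpow_sandwich_two_mul_le {A C : Matrix n n ℂ} (hA : A.PosSemidef)
    (hC : C.IsHermitian) {z : ℝ} (hz0 : 0 < z) (hz1 : z < 1) :
    (mpow (C * A * C) (2 * z)).trace.re ≤ (mpow (C * C * (A * A) * (C * C)) z).trace.re := by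
  have hN : (C * A * C).PosSemidef := by
    simpa only [hC.eq] using hA.conjTranspose_mul_mul_same C
  have hM : (C * C * (A * A) * (C * C)).PosSemidef := by
    simpa only [conjTranspose_mul, hA.1.eq, hC.eq, mul_assoc] using
      posSemidef_conjTranspose_mul_self (A * (C * C))
  have hprod (t : ℝ) (ht : 0 < t) :
      ∏ i, (1 + t * hN.1.eigenvalues i ^ 2) ≤ ∏ i, (1 + t * hM.1.eigenvalues i) := by
    have hMnonneg : 0 ≤ ∏ i, (1 + t * hM.1.eigenvalues i) := Finset.prod_nonneg fun i _ =>
      add_nonneg zero_le_one (mul_nonneg ht.le (hM.eigenvalues_nonneg i))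
    have h := norm_det_one_add_smul_sandwich_sq_le hA.1 hC ht.le
    rw [det_one_add_smul_sq hN.1, det_one_add_smul hM.1, RCLike.norm_ofReal, RCLike.norm_ofReal,
      abs_of_nonneg hMnonneg] at h
    exact (le_abs_self _).trans h
  rw [re_trace_mpow hN.1, re_trace_mpow hM.1]
  calc ∑ i, hN.1.eigenvalues i ^ (2 * z) = ∑ i, (hN.1.eigenvalues i ^ 2) ^ z :=
        Finset.sum_congr rfl fun i _ => by
          rw [Real.rpow_mul (hN.eigenvalues_nonneg i), Real.rpow_two]
    _ ≤ ∑ i, hM.1.eigenvalues i ^ z :=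
        sum_rpow_le_sum_rpow_of_prod_one_add_mul_le hz0 hz1 (fun i => sq_nonneg _)
          hM.eigenvalues_nonneg hprod

variable {ρ σ : Matrix n n ℂ} {α z : ℝ}

theorem Qaz_two_mul_le (hρ : ρ.PosSemidef) (hσ : σ.PosSemidef) (hα0 : 0 < α) (hα1 : α ≠ 1)
    (hz0 : 0 < z) (hz1 : z < 1) : Qaz α (2 * z) ρ σ ≤ Qaz α z ρ σ := by
  have hρexp : α / (2 * z) + α / (2 * z) = α / z := by
    field_simp
    ring
  have hσexp : (1 - α) / (2 * (2 * z)) + (1 - α) / (2 * (2 * z)) = (1 - α) / (2 * z) := by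
    field_simp
    ring
  have hσne : (1 - α) / (2 * z) ≠ 0 := div_ne_zero (sub_ne_zero.2 hα1.symm) (by positivity)
  have h := re_trace_mpow_sandwich_two_mul_le (posSemidef_mpow hρ (α / (2 * z)))
    (isHermitian_mpow hσ.1 ((1 - α) / (2 * (2 * z)))) hz0 hz1
  rwa [mpow_mul_mpow hρ (by rw [hρexp]; positivity), mpow_mul_mpow hσ (by rwa [hσexp]), hρexp,
    hσexp] at h

theorem exists_one_le_Qaz_le (hρ : ρ.PosSemidef) (hσ : σ.PosSemidef) (hα0 : 0 < α) (hα1 : α ≠ 1)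
    (hz : 0 < z) :
    ∃ w, 1 ≤ w ∧ Qaz α w ρ σ ≤ Qaz α z ρ σ := by
  obtain ⟨k, hk⟩ := pow_unbounded_of_one_lt z⁻¹ one_lt_two
  replace hk : 1 ≤ 2 ^ k * z := by
    rw [← inv_mul_cancel₀ hz.ne']
    gcongr
  induction k generalizing z with
  | zero => exact ⟨z, by simpa only [pow_zero, one_mul] using hk, le_rfl⟩
  | succ k ih =>
    rcases le_or_gt 1 z with hz1 | hz1
    · exact ⟨z, hz1, le_rfl⟩
    · obtain ⟨w, hw, hle⟩ := ih (mul_pos two_pos hz) (by rwa [← mul_assoc, ← pow_succ])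
      exact ⟨w, hw, hle.trans (Qaz_two_mul_le hρ hσ hα0 hα1 hz hz1)⟩

end Doubling

section StrictPositivity

variable {n : Type*} [Fintype n] [DecidableEq n] {ρ σ : Matrix n n ℂ} {α z : ℝ}

theorem Qaz_smul_self (hσ : σ.PosSemidef) (hα : 0 < α) (hz : 0 < z) {κ : ℝ} (hκ : 0 ≤ κ) :
    Qaz α z (κ • σ) σ = κ ^ α * σ.trace.re := by
  have hκσ : mpow (κ • σ) (α / z) = κ ^ (α / z) • mpow σ (α / z) := by
    simpa only [mpow_one hσ.1, one_mul] using mpow_smul_mpow hσ hκ 1 (α / z)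
  have hsum : (1 - α) / (2 * z) + α / z + (1 - α) / (2 * z) = 1 / z := by
    field_simp
    ring
  have hpartial : (1 - α) / (2 * z) + α / z ≠ 0 := by
    have : (1 - α) / (2 * z) + α / z = (1 + α) / (2 * z) := by
      field_simp
      ring
    rw [this]
    positivity
  rw [Qaz, hκσ, mul_smul_comm, smul_mul_assoc, mpow_mul_mpow hσ hpartial,
    mpow_mul_mpow hσ (by rw [hsum]; positivity), hsum,
    mpow_smul_mpow hσ (Real.rpow_nonneg hκ _), ← Real.rpow_mul hκ, div_mul_cancel₀ _ hz.ne',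
    one_div_mul_cancel hz.ne', mpow_one hσ.1, trace_smul, Complex.smul_re, smul_eq_mul]

theorem Qaz_strict_positivity_alpha_gt_one_general (hα : 1 < α) (hz : 0 < z)
    (hρ : ρ.PosSemidef) (hσ : σ.PosSemidef) (hσ0 : σ ≠ 0)
    (hsupp : ∀ v, σ *ᵥ v = 0 → ρ *ᵥ v = 0) :
    ρ.trace.re ^ α * σ.trace.re ^ (1 - α) ≤ Qaz α z ρ σ ∧
      (Qaz α z ρ σ = ρ.trace.re ^ α * σ.trace.re ^ (1 - α) ↔
        σ.trace • ρ = ρ.trace • σ) := by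
  have hb : 0 < σ.trace.re := re_trace_pos hσ hσ0
  have ha : 0 ≤ ρ.trace.re := (Complex.nonneg_iff.1 hρ.trace_nonneg).1
  set κ := ρ.trace.re / σ.trace.re
  have hκ0 : 0 ≤ κ := div_nonneg ha hb.le
  have htr : ρ.trace.re = κ * σ.trace.re := (div_mul_cancel₀ _ hb.ne').symm
  have hbound : ρ.trace.re ^ α * σ.trace.re ^ (1 - α) = κ ^ α * σ.trace.re := by
    rw [htr, Real.mul_rpow hκ0 hb.le, mul_assoc, ← Real.rpow_add hb, add_sub_cancel, Real.rpow_one]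
  have hbound' : κ ^ (α - 1) * ρ.trace.re = κ ^ α * σ.trace.re := by
    rw [htr, ← mul_assoc, ← Real.rpow_add_one' hκ0 (by linarith), sub_add_cancel]
  obtain ⟨w, hw, hle⟩ := exists_one_le_Qaz_le hρ hσ (by positivity) hα.ne' hz
  obtain ⟨hge, hrigid⟩ := rpow_mul_re_trace_le_Qaz hρ hσ hsupp hα hw hκ0 htr
  rw [hbound'] at hge hrigid
  rw [hbound, trace_smul_eq_trace_smul_iff hρ.1 hσ.1 hb.ne']
  refine ⟨hge.trans hle, fun heq => hrigid (le_antisymm (heq ▸ hle) hge), fun h => ?_⟩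
  rw [h]
  exact Qaz_smul_self hσ (by positivity) hz hκ0

end StrictPositivity

/-- Strict positivity for `α > 1`, `z > 0`, under the support condition
`supp ρ ⊆ supp σ`: `Q_{α,z}(ρ‖σ) ≥ (Tr ρ)^α (Tr σ)^{1−α}`; equality holds if
`(Tr σ) ρ = (Tr ρ) σ`; and conversely if `z ≥ α/2` and equality holds then
`(Tr σ) ρ = (Tr ρ) σ`. -/
theorem Qaz_strict_positivity_alpha_gt_one (n : ℕ) (α z : ℝ) (hα : 1 < α) (hz : 0 < z)
    (ρ σ : Matrix (Fin n) (Fin n) ℂ) (hρ : ρ.PosSemidef) (hσ : σ.PosSemidef)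
    (hρ0 : ρ ≠ 0) (hσ0 : σ ≠ 0)
    (hsupp : ∀ v : Fin n → ℂ, σ *ᵥ v = 0 → ρ *ᵥ v = 0) :
    (ρ.trace.re) ^ α * (σ.trace.re) ^ (1 - α) ≤ Qaz α z ρ σ ∧
    (σ.trace • ρ = ρ.trace • σ →
      Qaz α z ρ σ = (ρ.trace.re) ^ α * (σ.trace.re) ^ (1 - α)) ∧
    (α / 2 ≤ z → Qaz α z ρ σ = (ρ.trace.re) ^ α * (σ.trace.re) ^ (1 - α) →
      σ.trace • ρ = ρ.trace • σ) :=
  have ⟨hle, hiff⟩ := Qaz_strict_positivity_alpha_gt_one_general hα hz hρ hσ hσ0 hsupp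
  ⟨hle, hiff.2, fun _ => hiff.1⟩
end

section
/- Let p ≥ 1 be a real number. Let Φ be a ℂ-linear map from m×m complex matrices to n×n complex matrices that is unital (Φ(I) = I) and positive (Φ maps positive semidefinite matrices to positive semidefinite matrices), and let Ψ be its trace-adjoint, i.e., the ℂ-linear map from n×n to m×m complex matrices satisfying Tr(Ψ(A) · B) = Tr(A · Φ(B)) for all n×n matrices A and m×m matrices B. Let σ be an n×n positive semidefinite complex matrix and let b be an m×m positive semidefinite complex matrix whose support is contained in the support of Ψ(σ) (i.e., Ψ(σ)v = 0 implies bv = 0). Then Tr((σ^{1/(2p)} Φ(b) σ^{1/(2p)})^p) ≤ Tr((Ψ(σ)^{1/(2p)} b Ψ(σ)^{1/(2p)})^p). -/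
/-!
For strictly positive `σ`, `b`, put `ω = Ψ σ`, `A = σ^{1/2p} Φ(b) σ^{1/2p}` and
`B = ω^{1/2p} b ω^{1/2p}`, and consider the entire function
`F(z) = Tr(σ^{z/2} Φ(ω^{-z/2} B^{pz} ω^{-z/2}) σ^{z/2} A^{p(1-z)})`, for which `F(1/p) = Tr(A^p)`.
On the line `Re z = 0` the argument of `Φ` is unitary and `|F| ≤ ‖Φ(1)‖ Tr(A^p)`, because a positive
map is bounded on unitaries by its value at `1` (Russo–Dye). On the line `Re z = 1` adjointness
turns `Φ` into the Petz recovery map `X ↦ ω^{-1/2} Ψ(σ^{1/2} X σ^{1/2}) ω^{-1/2}`, which is positive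
and unital, so `|F| ≤ Tr(B^p)`. The three lines theorem at `z = 1/p` then bounds `Tr(A^p)` by
`(‖Φ(1)‖ Tr(A^p))^{1-1/p} Tr(B^p)^{1/p}`. General `σ`, `b` and `Φ` are limits of strictly
positive ones as `ε → 0`, replacing `σ` by `σ + ε`, `b` by `b + ε`, and `Φ`, `Ψ` by
`Φ + ε Tr(·) 1`, `Ψ + ε Tr(·) 1`.
-/

open Matrix
open scoped ComplexOrder

section PositiveMaps

variable {A B : Type*} [CStarAlgebra A] [CStarAlgebra B]

theorem star_sub_smul_one_mul_mul_sub_smul_one (T q : A) (w : ℂ) :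
    star (T - w • 1) * q * (T - w • 1) =
      star T * q * T - w • (star T * q) - star w • (q * T) + (‖w‖ ^ 2) • q := by
  have hnorm : ((‖w‖ ^ 2 : ℝ) : ℂ) = star w * w := by simpa using (Complex.conj_mul' w).symm
  simp only [star_sub, star_smul, star_one, sub_mul, mul_sub, smul_mul_assoc, mul_smul_comm,
    one_mul, mul_one, ← Complex.coe_smul, hnorm]
  module

theorem norm_one_le_one : ‖(1 : A)‖ ≤ 1 := IsStarProjection.norm_le 1 (.one A)

variable [PartialOrder A] [StarOrderedRing A] [PartialOrder B] [StarOrderedRing B]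

theorem norm_positiveFunctional_apply_le (f : A →ₚ[ℂ] ℂ) (a : A) : ‖f a‖ ≤ (f 1).re * ‖a‖ := by
  let ξ := f.toPreGNS 1
  have hξ : ‖ξ‖ ^ 2 = (f 1).re := by
    rw [← Complex.ofReal_re (‖ξ‖ ^ 2), Complex.ofReal_pow, f.preGNS_norm_sq]
    simp [ξ]
  calc ‖f a‖ = ‖inner ℂ ξ (f.leftMulMapPreGNS a ξ)‖ := by simp [f.preGNS_inner_def, ξ]
    _ ≤ ‖ξ‖ * ‖f.leftMulMapPreGNS a ξ‖ := norm_inner_le_norm _ _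
    _ ≤ ‖ξ‖ * (‖a‖ * ‖ξ‖) := by
      gcongr
      refine (f.leftMulMapPreGNS a).le_of_opNorm_le ?_ ξ
      exact LinearMap.mkContinuous_norm_le _ (norm_nonneg a) _
    _ = (f 1).re * ‖a‖ := by rw [← hξ]; ring

theorem star_mul_self_sum_smul_le {ι : Type*} (s : Finset ι) {z : ι → ℂ} {q : ι → A} {c : ℝ}
    (hc : 0 < c) (hz : ∀ i ∈ s, ‖z i‖ ≤ 1) (hq : ∀ i ∈ s, 0 ≤ q i)
    (hqc : ∑ i ∈ s, q i ≤ c • (1 : A)) :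
    star (∑ i ∈ s, z i • q i) * ∑ i ∈ s, z i • q i ≤ (c ^ 2) • (1 : A) := by
  set T := ∑ i ∈ s, z i • q i with hT
  set Q := ∑ i ∈ s, q i with hQ
  have hTstar : star T = ∑ i ∈ s, star (z i) • q i := by
    simp only [hT, star_sum, star_smul]
    exact Finset.sum_congr rfl fun i hi => by rw [(hq i hi).isSelfAdjoint.star_eq]
  -- Expand `0 ≤ ∑ (T - c zᵢ)⋆ qᵢ (T - c zᵢ)` and use `∑ qᵢ ≤ c`, `|zᵢ| ≤ 1`: this leaves
  -- `0 ≤ c T⋆T - 2c T⋆T + c³`.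
  have hexpand : ∑ i ∈ s, star (T - (c * z i) • 1) * q i * (T - (c * z i) • 1) =
      star T * Q * T - (2 * c) • (star T * T) + c ^ 2 • ∑ i ∈ s, ‖z i‖ ^ 2 • q i := by
    have hterm : ∀ i, star (T - (c * z i) • 1) * q i * (T - (c * z i) • 1) =
        star T * q i * T - c • (star T * (z i • q i)) - c • ((star (z i) • q i) * T)
          + c ^ 2 • ‖z i‖ ^ 2 • q i := fun i => by
      rw [star_sub_smul_one_mul_mul_sub_smul_one, norm_mul, Complex.norm_of_nonneg hc.le]
      simp only [star_mul', Complex.star_def, Complex.conj_ofReal, mul_smul_comm, smul_mul_assoc,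
        ← Complex.coe_smul]
      push_cast
      module
    simp only [hterm, Finset.sum_add_distrib, Finset.sum_sub_distrib, ← Finset.smul_sum,
      ← Finset.mul_sum, ← Finset.sum_mul, ← hTstar, ← hT, ← hQ]
    module
  have hsq : ∑ i ∈ s, ‖z i‖ ^ 2 • q i ≤ c • (1 : A) := by
    refine (Finset.sum_le_sum fun i hi => ?_).trans hqc
    exact smul_le_of_le_one_left (hq i hi) (pow_le_one₀ (norm_nonneg _) (hz i hi))
  have hconj : star T * Q * T ≤ c • (star T * T) := by
    simpa using star_left_conjugate_le_conjugate hqc T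
  have hnonneg : 0 ≤ c • (star T * T) - (2 * c) • (star T * T) + c ^ 2 • c • (1 : A) :=
    calc (0 : A) ≤ ∑ i ∈ s, star (T - (c * z i) • 1) * q i * (T - (c * z i) • 1) :=
          Finset.sum_nonneg fun i hi => star_left_conjugate_nonneg (hq i hi) _
      _ ≤ _ := by rw [hexpand]; gcongr
  have : c • (star T * T) ≤ c • (c ^ 2 • (1 : A)) := by
    rw [← sub_nonneg]
    convert hnonneg using 1
    module
  exact (smul_le_smul_iff_of_pos_left hc).1 this

theorem norm_sum_smul_le_norm_sum {ι : Type*} (s : Finset ι) {z : ι → ℂ} {q : ι → A}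
    (hz : ∀ i ∈ s, ‖z i‖ ≤ 1) (hq : ∀ i ∈ s, 0 ≤ q i) :
    ‖∑ i ∈ s, z i • q i‖ ≤ ‖∑ i ∈ s, q i‖ := by
  refine le_of_forall_gt_imp_ge_of_dense fun c hc => ?_
  have hc0 : 0 < c := (norm_nonneg _).trans_lt hc
  have hqc : ∑ i ∈ s, q i ≤ c • (1 : A) := by
    rw [← Algebra.algebraMap_eq_smul_one]
    exact (CStarAlgebra.norm_le_iff_le_algebraMap _ hc0.le (Finset.sum_nonneg hq)).1 hc.le
  have h := star_mul_self_sum_smul_le s hc0 hz hq hqc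
  rw [← Algebra.algebraMap_eq_smul_one,
    ← CStarAlgebra.norm_le_iff_le_algebraMap _ (sq_nonneg c) (star_mul_self_nonneg _),
    CStarRing.norm_star_mul_self, ← sq] at h
  exact le_of_sq_le_sq h hc0.le

theorem norm_positiveMap_unitary_le (Φ : A →ₚ[ℂ] B) {u : A} (hu : u ∈ unitary A)
    (hfin : (spectrum ℂ u).Finite) : ‖Φ u‖ ≤ ‖Φ 1‖ := by
  have := isStarNormal_of_mem_unitary hu
  let e : ℂ → A := fun l => cfc (Pi.single l (1 : ℂ) : ℂ → ℂ) u
  have hcont : ∀ f : ℂ → ℂ, ContinuousOn f (spectrum ℂ u) := hfin.continuousOn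
  have hdecomp : ∀ f : ℂ → ℂ, cfc f u = ∑ l ∈ hfin.toFinset, f l • e l := fun f => by
    rw [← Finset.sum_congr rfl fun l _ => cfc_const_mul (f l) (Pi.single l 1) u (hcont _),
      ← cfc_sum _ _ _ fun l _ => hcont _]
    refine cfc_congr fun x hx => ?_
    simp [Finset.sum_apply, Pi.single_apply, hx]
  have he : ∀ l, 0 ≤ e l := fun l => cfc_nonneg fun x _ => by
    obtain rfl | hx := eq_or_ne x l <;> simp [*]
  have hu_eq : Φ u = ∑ l ∈ hfin.toFinset, l • Φ (e l) := by
    simpa [cfc_id'] using congrArg Φ (hdecomp fun x => x)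
  have hone_eq : Φ 1 = ∑ l ∈ hfin.toFinset, Φ (e l) := by
    simpa [cfc_const_one] using congrArg Φ (hdecomp fun _ => 1)
  rw [hu_eq, hone_eq]
  refine norm_sum_smul_le_norm_sum _ (fun l hl => ?_) fun l _ => map_nonneg Φ (he l)
  simpa using (spectrum.subset_circle_of_unitary hu (hfin.mem_toFinset.1 hl)).le

end PositiveMaps

section ComplexPower

open Asymptotics Filter

variable {A : Type*} [CStarAlgebra A]

/-- The complex power `a ^ z = exp (z log a)`. It is defined through the exponential so that it is
analytic in `z`; for strictly positive `a` and real `z` it agrees with `CFC.rpow`. -/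
noncomputable def cpow (a : A) (z : ℂ) : A := NormedSpace.exp (z • CFC.log a)

theorem cpow_add (a : A) (z w : ℂ) : cpow a (z + w) = cpow a z * cpow a w := by
  let +nondep : NormedAlgebra ℚ A := .restrictScalars ℚ ℂ A
  rw [cpow, add_smul, NormedSpace.exp_add_of_commute
    (((Commute.refl _).smul_left z).smul_right w), cpow, cpow]

theorem cpow_mul_I_mem_unitary (a : A) (t : ℝ) : cpow a (t * Complex.I) ∈ unitary A := by
  let +nondep : NormedAlgebra ℚ A := .restrictScalars ℚ ℂ A
  refine NormedSpace.exp_mem_unitary_of_mem_skewAdjoint (skewAdjoint.mem_iff.2 ?_)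
  simp [star_smul, IsSelfAdjoint.log.star_eq]

theorem differentiable_cpow (a : A) {g : ℂ → ℂ} (hg : Differentiable ℂ g) :
    Differentiable ℂ fun z => cpow a (g z) := fun z =>
  (hasDerivAt_exp_smul_const (CFC.log a) (g z)).differentiableAt.comp z (hg z)

theorem norm_cpow (a : A) (z : ℂ) : ‖cpow a z‖ = ‖cpow a z.re‖ := by
  conv_lhs => rw [← Complex.re_add_im z, cpow_add]
  exact CStarRing.norm_mul_mem_unitary _ (cpow_mul_I_mem_unitary a z.im)

theorem isBigO_cpow_one (a : A) {S : Set ℂ} {g : ℂ → ℂ} {r : ℝ}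
    (hg : ∀ z ∈ S, |(g z).re| ≤ r) : (fun z => cpow a (g z)) =O[𝓟 S] (1 : ℂ → ℝ) := by
  have hcont : Continuous fun x : ℝ => cpow a x :=
    (differentiable_cpow a differentiable_id).continuous.comp Complex.continuous_ofReal
  obtain ⟨C, hC⟩ :=
    (isCompact_Icc (a := -r) (b := r)).exists_bound_of_continuousOn hcont.continuousOn
  refine isBigO_principal.2 ⟨C, fun z hz => ?_⟩
  simpa [norm_cpow a (g z)] using hC _ (abs_le.1 (hg z hz))

theorem cpow_ofReal [PartialOrder A] [StarOrderedRing A] {a : A} (ha : IsStrictlyPositive a)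
    (t : ℝ) : cpow a t = a ^ t := by
  have hpos : ∀ x ∈ spectrum ℝ a, 0 < x := fun x hx => ha.spectrum_pos hx
  have hlog : ContinuousOn Real.log (spectrum ℝ a) :=
    Real.continuousOn_log.mono fun x hx => (hpos x hx).ne'
  have hsa : IsSelfAdjoint a := ha.isSelfAdjoint
  calc cpow a t = cfc Real.exp (t • CFC.log a) := by
        rw [cpow, Complex.coe_smul, CFC.real_exp_eq_normedSpace_exp (.smul (.all t) .log)]
    _ = cfc (fun x => Real.exp (t • Real.log x)) a := by
        rw [CFC.log, ← cfc_smul t Real.log a hlog,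
          cfc_comp' Real.exp (fun x => t • Real.log x) a (by fun_prop) (hlog.const_smul t)]
    _ = a ^ t := by
        rw [CFC.rpow_eq_cfc_real ha.nonneg]
        exact cfc_congr fun x hx => by
          simp [Real.rpow_def_of_pos (hpos x hx), mul_comm]

theorem cpow_ofReal_add_mul_I [PartialOrder A] [StarOrderedRing A] {a : A}
    (ha : IsStrictlyPositive a) (s t : ℝ) :
    cpow a (s + t * Complex.I) = a ^ s * cpow a (t * Complex.I) := by
  rw [cpow_add, cpow_ofReal ha]

theorem cpow_ofReal_add_mul_I' [PartialOrder A] [StarOrderedRing A] {a : A}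
    (ha : IsStrictlyPositive a) (s t : ℝ) :
    cpow a (s + t * Complex.I) = cpow a (t * Complex.I) * a ^ s := by
  rw [add_comm, cpow_add, cpow_ofReal ha]

end ComplexPower

section Conjugation

variable {A : Type*} [CStarAlgebra A] [PartialOrder A] [StarOrderedRing A]

/-- The positive map `x ↦ s x s` given by a self-adjoint element `s`. -/
noncomputable def conjMap (s : selfAdjoint A) : A →ₚ[ℂ] A :=
  .mk₀ (.mulLeftRight ℂ ((s : A), (s : A))) fun _ hx => s.2.conjugate_nonneg hx

theorem conjMap_apply (s : selfAdjoint A) (x : A) : conjMap s x = s * x * s := rfl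

theorem isStrictlyPositive_rpow_mul_mul_rpow {a b : A} (ha : IsStrictlyPositive a)
    (hb : IsStrictlyPositive b) (s : ℝ) : IsStrictlyPositive (a ^ s * b * a ^ s) :=
  ⟨CFC.rpow_nonneg.isSelfAdjoint.conjugate_nonneg hb.nonneg,
    (ha.rpow a s).isUnit.mul hb.isUnit |>.mul (ha.rpow a s).isUnit⟩

end Conjugation

section Matrix

open scoped Matrix.Norms.L2Operator MatrixOrder

variable {n m : Type*} [Fintype n] [Fintype m]

theorem trace_re_nonneg {P : Matrix n n ℂ} (hP : 0 ≤ P) : 0 ≤ P.trace.re :=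
  (Complex.nonneg_iff.1 (Matrix.nonneg_iff_posSemidef.1 hP).trace_nonneg).1

theorem trace_mul_nonneg {X Y : Matrix n n ℂ} (hX : 0 ≤ X) (hY : 0 ≤ Y) : 0 ≤ (X * Y).trace := by
  classical
  rw [← CFC.sqrt_mul_sqrt_self X, mul_assoc, trace_mul_comm]
  exact (Matrix.nonneg_iff_posSemidef.1 <|
    (CFC.sqrt_nonneg X).isSelfAdjoint.conjugate_nonneg hY).trace_nonneg

theorem nonneg_of_forall_trace_mul_nonneg {X : Matrix n n ℂ}
    (h : ∀ Y : Matrix n n ℂ, 0 ≤ Y → 0 ≤ (X * Y).trace) : 0 ≤ X := by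
  classical
  rw [Matrix.nonneg_iff_posSemidef, ← Matrix.isPositive_toEuclideanLin_iff,
    LinearMap.isPositive_iff_complex]
  intro v
  have hquad : inner ℂ (X.toEuclideanLin v) v = star (X * vecMulVec v (star v)).trace := by
    rw [mul_vecMulVec, trace_vecMulVec, ← star_dotProduct_star, star_star]
    rfl
  obtain ⟨hre, him⟩ := Complex.nonneg_iff.1 <|
    h _ (Matrix.nonneg_iff_posSemidef.2 (posSemidef_vecMulVec_self_star v.ofLp))
  rw [hquad]
  exact ⟨Complex.ext (by simp) (by simp [← him]), by simpa using hre⟩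

/-- `Ψ` is the adjoint of `Φ` for the trace pairing `(A, B) ↦ Tr(AB)`. -/
def IsTraceAdjoint (Φ : Matrix m m ℂ → Matrix n n ℂ) (Ψ : Matrix n n ℂ → Matrix m m ℂ) : Prop :=
  ∀ A B, (Ψ A * B).trace = (A * Φ B).trace

theorem IsTraceAdjoint.map_nonneg {Φ : Matrix m m ℂ →ₚ[ℂ] Matrix n n ℂ}
    {Ψ : Matrix n n ℂ → Matrix m m ℂ} (h : IsTraceAdjoint Φ Ψ) {X : Matrix n n ℂ} (hX : 0 ≤ X) :
    0 ≤ Ψ X :=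
  nonneg_of_forall_trace_mul_nonneg fun Y hY =>
    (trace_mul_nonneg hX (Φ.map_nonneg hY)).trans_eq (h X Y).symm

variable [DecidableEq n] [DecidableEq m]

theorem norm_trace_mul_le {P : Matrix n n ℂ} (hP : 0 ≤ P) (C : Matrix n n ℂ) :
    ‖(P * C).trace‖ ≤ P.trace.re * ‖C‖ := by
  let f := (Matrix.tracePositiveLinearMap n ℂ ℂ).comp
    (conjMap ⟨CFC.sqrt P, (CFC.sqrt_nonneg P).isSelfAdjoint⟩)
  have hf : ∀ X, f X = (P * X).trace := fun X => by
    have hfX : f X = (CFC.sqrt P * X * CFC.sqrt P).trace := by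
      simp [f, conjMap_apply, PositiveLinearMap.comp_apply]
    rw [hfX, trace_mul_comm, ← mul_assoc, CFC.sqrt_mul_sqrt_self P]
  simpa [hf] using norm_positiveFunctional_apply_le f C

theorem norm_trace_mul_positiveMap_le {Θ : Matrix m m ℂ →ₚ[ℂ] Matrix n n ℂ} {P U V : Matrix n n ℂ}
    {W : Matrix m m ℂ} (hP : 0 ≤ P) (hU : U ∈ unitary (Matrix n n ℂ))
    (hV : V ∈ unitary (Matrix n n ℂ)) (hW : W ∈ unitary (Matrix m m ℂ)) :
    ‖(P * (U * Θ W * V)).trace‖ ≤ ‖Θ 1‖ * P.trace.re := by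
  calc ‖(P * (U * Θ W * V)).trace‖ ≤ P.trace.re * ‖U * Θ W * V‖ := norm_trace_mul_le hP _
    _ = P.trace.re * ‖Θ W‖ := by
      rw [CStarRing.norm_mul_mem_unitary _ hV, CStarRing.norm_mem_unitary_mul _ hU]
    _ ≤ P.trace.re * ‖Θ 1‖ := by
      gcongr
      · exact trace_re_nonneg hP
      · exact norm_positiveMap_unitary_le Θ hW W.finite_spectrum
    _ = _ := mul_comm _ _

/-- The Petz recovery map `X ↦ ω^{-1/2} Ψ(σ^{1/2} X σ^{1/2}) ω^{-1/2}` with `ω = Ψ(σ)`, which is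
positive and, for invertible `ω`, unital. -/
noncomputable def petzRecovery (Ψ : Matrix n n ℂ →ₚ[ℂ] Matrix m m ℂ) (σ : Matrix n n ℂ) :
    Matrix n n ℂ →ₚ[ℂ] Matrix m m ℂ :=
  (conjMap ⟨Ψ σ ^ (-(1 / 2) : ℝ), CFC.rpow_nonneg.isSelfAdjoint⟩).comp
    (Ψ.comp (conjMap ⟨σ ^ (1 / 2 : ℝ), CFC.rpow_nonneg.isSelfAdjoint⟩))

theorem petzRecovery_apply (Ψ : Matrix n n ℂ →ₚ[ℂ] Matrix m m ℂ) (σ X : Matrix n n ℂ) :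
    petzRecovery Ψ σ X = Ψ σ ^ (-(1 / 2) : ℝ) * Ψ (σ ^ (1 / 2 : ℝ) * X * σ ^ (1 / 2 : ℝ)) *
      Ψ σ ^ (-(1 / 2) : ℝ) := rfl

theorem petzRecovery_one {Ψ : Matrix n n ℂ →ₚ[ℂ] Matrix m m ℂ} {σ : Matrix n n ℂ}
    (hσ : 0 ≤ σ) (hω : IsStrictlyPositive (Ψ σ)) : petzRecovery Ψ σ 1 = 1 := by
  rw [petzRecovery_apply, mul_one, ← CFC.sqrt_eq_rpow, CFC.sqrt_mul_sqrt_self σ,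
    CFC.conjugate_rpow_neg_one_half (Ψ σ)]

section Interpolation

open Asymptotics Filter Complex.HadamardThreeLines

/-- The analytic family `Tr(σ^{z/2} Φ(ω^{-z/2} B^{pz} ω^{-z/2}) σ^{z/2} A^{p(1-z)})` to which the
three lines theorem is applied, with `ω` standing for `Ψ(σ)`. -/
noncomputable def petzInterpolant (p : ℝ) (Φ : Matrix m m ℂ →ₚ[ℂ] Matrix n n ℂ)
    (σ A : Matrix n n ℂ) (ω B : Matrix m m ℂ) (z : ℂ) : ℂ :=
  (cpow σ (z / 2) * Φ (cpow ω (-z / 2) * cpow B (p * z) * cpow ω (-z / 2)) * cpow σ (z / 2) *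
    cpow A (p * (1 - z))).trace

variable {p : ℝ} {Φ : Matrix m m ℂ →ₚ[ℂ] Matrix n n ℂ} {σ A : Matrix n n ℂ} {ω B : Matrix m m ℂ}

theorem differentiable_petzInterpolant : Differentiable ℂ (petzInterpolant p Φ σ A ω B) := by
  have hω : Differentiable ℂ fun z => cpow ω (-z / 2) := differentiable_cpow ω (by fun_prop)
  have hσ : Differentiable ℂ fun z => cpow σ (z / 2) := differentiable_cpow σ (by fun_prop)
  have hΦ := Φ.toLinearMap.toContinuousLinearMap.differentiable.comp
    ((hω.mul (differentiable_cpow B (g := fun z => p * z) (by fun_prop))).mul hω)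
  exact (traceLinearMap n ℂ ℂ).toContinuousLinearMap.differentiable.comp
    (((hσ.mul hΦ).mul hσ).mul (differentiable_cpow A (g := fun z => p * (1 - z)) (by fun_prop)))

theorem isBigO_petzInterpolant_one :
    petzInterpolant p Φ σ A ω B =O[𝓟 (verticalClosedStrip 0 1)] (1 : ℂ → ℝ) := by
  have hσ : (fun z => cpow σ (z / 2)) =O[𝓟 (verticalClosedStrip 0 1)] (1 : ℂ → ℝ) :=
    isBigO_cpow_one σ (r := 1) fun z ⟨h0, h1⟩ => by
      rw [Complex.div_ofNat_re, abs_le]; constructor <;> linarith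
  have hω : (fun z => cpow ω (-z / 2)) =O[𝓟 (verticalClosedStrip 0 1)] (1 : ℂ → ℝ) :=
    isBigO_cpow_one ω (r := 1) fun z ⟨h0, h1⟩ => by
      rw [Complex.div_ofNat_re, Complex.neg_re, abs_le]; constructor <;> linarith
  have hB : (fun z => cpow B (p * z)) =O[𝓟 (verticalClosedStrip 0 1)] (1 : ℂ → ℝ) :=
    isBigO_cpow_one B (r := |p|) fun z ⟨h0, h1⟩ => by
      rw [Complex.re_ofReal_mul, abs_mul]
      exact mul_le_of_le_one_right (abs_nonneg p) (abs_le.2 ⟨by linarith, h1⟩)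
  have hA : (fun z => cpow A (p * (1 - z))) =O[𝓟 (verticalClosedStrip 0 1)] (1 : ℂ → ℝ) :=
    isBigO_cpow_one A (r := |p|) fun z ⟨h0, h1⟩ => by
      rw [Complex.re_ofReal_mul, abs_mul, Complex.sub_re, Complex.one_re]
      exact mul_le_of_le_one_right (abs_nonneg p) (abs_le.2 ⟨by linarith, by linarith⟩)
  have hΦ := (Φ.toLinearMap.toContinuousLinearMap.isBigO_comp _ _).trans ((hω.mul hB).mul hω)
  have htr := ((traceLinearMap n ℂ ℂ).toContinuousLinearMap.isBigO_comp _ _).trans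
    (((hσ.mul hΦ).mul hσ).mul hA)
  exact htr.congr (fun _ => rfl) fun _ => by simp

theorem norm_petzInterpolant_mul_I_le (hA : IsStrictlyPositive A) (t : ℝ) :
    ‖petzInterpolant p Φ σ A ω B (t * Complex.I)‖ ≤ ‖Φ 1‖ * (A ^ p).trace.re := by
  have hU : cpow σ (t * Complex.I / 2) ∈ unitary (Matrix n n ℂ) := by
    simpa [mul_div_right_comm] using cpow_mul_I_mem_unitary σ (t / 2)
  have hV : cpow ω (-(t * Complex.I) / 2) ∈ unitary (Matrix m m ℂ) := by
    simpa [mul_div_right_comm, neg_div] using cpow_mul_I_mem_unitary ω (-(t / 2))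
  have hW : cpow B (p * (t * Complex.I)) ∈ unitary (Matrix m m ℂ) := by
    simpa [mul_assoc] using cpow_mul_I_mem_unitary B (p * t)
  have hA' : cpow A (p * (1 - t * Complex.I)) =
      cpow A ((-(p * t) : ℝ) * Complex.I) * A ^ p := by
    rw [← cpow_ofReal_add_mul_I' hA]
    push_cast
    ring_nf
  have hcyc : petzInterpolant p Φ σ A ω B (t * Complex.I) = (A ^ p * (cpow σ (t * Complex.I / 2) *
      Φ (cpow ω (-(t * Complex.I) / 2) * cpow B (p * (t * Complex.I)) *
        cpow ω (-(t * Complex.I) / 2)) *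
      (cpow σ (t * Complex.I / 2) * cpow A ((-(p * t) : ℝ) * Complex.I)))).trace := by
    rw [petzInterpolant, hA', ← mul_assoc, trace_mul_comm (_ * _) (A ^ p), mul_assoc (_ * _)]
  rw [hcyc]
  exact norm_trace_mul_positiveMap_le CFC.rpow_nonneg hU
    (mul_mem hU (cpow_mul_I_mem_unitary _ _)) (mul_mem (mul_mem hV hW) hV)

theorem petzInterpolant_one_add_mul_I {Ψ : Matrix n n ℂ →ₚ[ℂ] Matrix m m ℂ}
    (hΨ : IsTraceAdjoint Φ Ψ) (hσ : IsStrictlyPositive σ) (hω : IsStrictlyPositive (Ψ σ))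
    (hB : IsStrictlyPositive B) (t : ℝ) :
    petzInterpolant p Φ σ A (Ψ σ) B (1 + t * Complex.I) =
      (B ^ p * (cpow B ((p * t : ℝ) * Complex.I) * cpow (Ψ σ) ((-(t / 2) : ℝ) * Complex.I) *
        petzRecovery Ψ σ (cpow σ ((t / 2 : ℝ) * Complex.I) *
          cpow A ((-(p * t) : ℝ) * Complex.I) * cpow σ ((t / 2 : ℝ) * Complex.I)) *
        cpow (Ψ σ) ((-(t / 2) : ℝ) * Complex.I))).trace := by
  set W := cpow σ ((t / 2 : ℝ) * Complex.I) * cpow A ((-(p * t) : ℝ) * Complex.I) *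
    cpow σ ((t / 2 : ℝ) * Complex.I) with hW
  set U := cpow B ((p * t : ℝ) * Complex.I) with hU
  set V := cpow (Ψ σ) ((-(t / 2) : ℝ) * Complex.I) with hV
  have hexp : (1 + t * Complex.I) / 2 = (1 / 2 : ℝ) + (t / 2 : ℝ) * Complex.I := by
    push_cast; ring
  have hexp' : -(1 + t * Complex.I) / 2 = (-(1 / 2) : ℝ) + (-(t / 2) : ℝ) * Complex.I := by
    push_cast; ring
  have hBexp : p * (1 + t * Complex.I) = p + (p * t : ℝ) * Complex.I := by push_cast; ring
  have hAexp : p * (1 - (1 + t * Complex.I)) = (-(p * t) : ℝ) * Complex.I := by push_cast; ring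
  calc petzInterpolant p Φ σ A (Ψ σ) B (1 + t * Complex.I)
      = (σ ^ (1 / 2 : ℝ) * W * σ ^ (1 / 2 : ℝ) * Φ (Ψ σ ^ (-(1 / 2) : ℝ) * V *
          (B ^ p * U) * (V * Ψ σ ^ (-(1 / 2) : ℝ)))).trace := by
        rw [petzInterpolant, mul_assoc (_ * _), trace_mul_comm, ← mul_assoc, hexp, hexp', hBexp,
          hAexp, cpow_ofReal_add_mul_I hB]
        nth_rw 1 [cpow_ofReal_add_mul_I hσ, cpow_ofReal_add_mul_I hω]
        rw [cpow_ofReal_add_mul_I' hσ, cpow_ofReal_add_mul_I' hω, hW, hU, hV]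
        simp only [mul_assoc]
    _ = (Ψ (σ ^ (1 / 2 : ℝ) * W * σ ^ (1 / 2 : ℝ)) * (Ψ σ ^ (-(1 / 2) : ℝ) * V *
          (B ^ p * U) * (V * Ψ σ ^ (-(1 / 2) : ℝ)))).trace := (hΨ _ _).symm
    _ = _ := by
        rw [petzRecovery_apply, mul_assoc _ (B ^ p * U), mul_assoc (B ^ p), ← mul_assoc,
          trace_mul_comm]
        simp only [mul_assoc]

theorem norm_petzInterpolant_one_add_mul_I_le {Ψ : Matrix n n ℂ →ₚ[ℂ] Matrix m m ℂ}
    (hΨ : IsTraceAdjoint Φ Ψ) (hσ : IsStrictlyPositive σ) (hω : IsStrictlyPositive (Ψ σ))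
    (hB : IsStrictlyPositive B) (t : ℝ) :
    ‖petzInterpolant p Φ σ A (Ψ σ) B (1 + t * Complex.I)‖ ≤ (B ^ p).trace.re := by
  rw [petzInterpolant_one_add_mul_I hΨ hσ hω hB]
  calc _ ≤ ‖petzRecovery Ψ σ 1‖ * (B ^ p).trace.re :=
        norm_trace_mul_positiveMap_le CFC.rpow_nonneg
          (mul_mem (cpow_mul_I_mem_unitary _ _) (cpow_mul_I_mem_unitary _ _))
          (cpow_mul_I_mem_unitary _ _)
          (mul_mem (mul_mem (cpow_mul_I_mem_unitary _ _) (cpow_mul_I_mem_unitary _ _))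
            (cpow_mul_I_mem_unitary _ _))
    _ ≤ (B ^ p).trace.re := by
      rw [petzRecovery_one hσ.nonneg hω]
      exact mul_le_of_le_one_left (trace_re_nonneg CFC.rpow_nonneg) norm_one_le_one

theorem petzInterpolant_inv (hp : p ≠ 0) {b : Matrix m m ℂ} (hσ : IsStrictlyPositive σ)
    (hω : IsStrictlyPositive ω)
    (hA : IsStrictlyPositive (σ ^ (1 / (2 * p)) * Φ b * σ ^ (1 / (2 * p))))
    (hB : IsStrictlyPositive (ω ^ (1 / (2 * p)) * b * ω ^ (1 / (2 * p)))) :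
    petzInterpolant p Φ σ (σ ^ (1 / (2 * p)) * Φ b * σ ^ (1 / (2 * p))) ω
      (ω ^ (1 / (2 * p)) * b * ω ^ (1 / (2 * p))) (p⁻¹ : ℝ) =
      ((σ ^ (1 / (2 * p)) * Φ b * σ ^ (1 / (2 * p))) ^ p).trace := by
  have hhalf : ((p⁻¹ : ℝ) : ℂ) / 2 = (1 / (2 * p) : ℝ) := by push_cast; ring
  have hnhalf : -((p⁻¹ : ℝ) : ℂ) / 2 = (-(1 / (2 * p)) : ℝ) := by push_cast; ring
  have hBexp : (p : ℂ) * (p⁻¹ : ℝ) = (1 : ℝ) := by push_cast; field_simp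
  have hAexp : (p : ℂ) * (1 - (p⁻¹ : ℝ)) = (p - 1 : ℝ) := by push_cast; field_simp
  have hneg : ω ^ (-(1 / (2 * p))) * ω ^ (1 / (2 * p)) = 1 := CFC.rpow_neg_mul_rpow _ hω
  have hneg' : ω ^ (1 / (2 * p)) * ω ^ (-(1 / (2 * p))) = 1 := CFC.rpow_mul_rpow_neg _ hω
  set A := σ ^ (1 / (2 * p)) * Φ b * σ ^ (1 / (2 * p)) with hAdef
  rw [petzInterpolant, hhalf, hnhalf, hBexp, hAexp, cpow_ofReal hσ, cpow_ofReal hω, cpow_ofReal hB,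
    cpow_ofReal hA, CFC.rpow_one _ hB.nonneg]
  have hb : ω ^ (-(1 / (2 * p))) * (ω ^ (1 / (2 * p)) * b * ω ^ (1 / (2 * p))) *
      ω ^ (-(1 / (2 * p))) = b := by
    simp only [mul_assoc, hneg', mul_one]
    rw [← mul_assoc, hneg, one_mul]
  rw [hb, ← hAdef]
  nth_rw 1 [← CFC.rpow_one A hA.nonneg]
  rw [← CFC.rpow_add hA.isUnit, add_sub_cancel]

theorem le_rpow_mul_of_le_mul_rpow_mul_rpow {p c T S : ℝ} (hp : 1 ≤ p) (hc : 0 ≤ c) (hT : 0 ≤ T)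
    (hS : 0 ≤ S) (h : T ≤ (c * T) ^ (1 - p⁻¹) * S ^ p⁻¹) : T ≤ c ^ (p - 1) * S := by
  obtain rfl | hT' := hT.eq_or_lt
  · positivity
  have hp0 : 0 < p := by positivity
  have hpow : T ^ (p - 1) * T ≤ T ^ (p - 1) * (c ^ (p - 1) * S) :=
    calc T ^ (p - 1) * T = T ^ p := by rw [← Real.rpow_add_one hT'.ne', sub_add_cancel]
      _ ≤ ((c * T) ^ (1 - p⁻¹) * S ^ p⁻¹) ^ p := by gcongr
      _ = (c * T) ^ (p - 1) * S := by
        rw [Real.mul_rpow (by positivity) (by positivity), ← Real.rpow_mul (by positivity),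
          Real.rpow_inv_rpow hS hp0.ne', sub_mul, inv_mul_cancel₀ hp0.ne', one_mul]
      _ = T ^ (p - 1) * (c ^ (p - 1) * S) := by rw [Real.mul_rpow hc hT]; ring
  exact le_of_mul_le_mul_left hpow (by positivity)

/-- The sandwiched trace `Tr((σ^{1/2p} B σ^{1/2p})^p)`, the quantity underlying the sandwiched Rényi
divergence, with powers taken by the continuous functional calculus. -/
noncomputable def sandwichedTrace (p : ℝ) (σ B : Matrix n n ℂ) : ℝ :=
  ((σ ^ (1 / (2 * p)) * B * σ ^ (1 / (2 * p))) ^ p).trace.re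

theorem sandwichedTrace_nonneg (p : ℝ) (σ B : Matrix n n ℂ) : 0 ≤ sandwichedTrace p σ B :=
  trace_re_nonneg CFC.rpow_nonneg

theorem sandwichedTrace_le_of_isStrictlyPositive (hp : 1 ≤ p) {Ψ : Matrix n n ℂ →ₚ[ℂ] Matrix m m ℂ}
    (hΨ : IsTraceAdjoint Φ Ψ) {b : Matrix m m ℂ} (hσ : IsStrictlyPositive σ)
    (hω : IsStrictlyPositive (Ψ σ)) (hb : IsStrictlyPositive b) (hΦb : IsStrictlyPositive (Φ b)) :
    sandwichedTrace p σ (Φ b) ≤ ‖Φ 1‖ ^ (p - 1) * sandwichedTrace p (Ψ σ) b := by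
  have hp0 : 0 < p := by positivity
  set A := σ ^ (1 / (2 * p)) * Φ b * σ ^ (1 / (2 * p))
  set B := Ψ σ ^ (1 / (2 * p)) * b * Ψ σ ^ (1 / (2 * p))
  have hA : IsStrictlyPositive A := isStrictlyPositive_rpow_mul_mul_rpow hσ hΦb _
  have hB : IsStrictlyPositive B := isStrictlyPositive_rpow_mul_mul_rpow hω hb _
  refine le_rpow_mul_of_le_mul_rpow_mul_rpow hp (norm_nonneg _) (sandwichedTrace_nonneg _ _ _)
    (sandwichedTrace_nonneg _ _ _) ?_
  have hbdd : BddAbove ((norm ∘ petzInterpolant p Φ σ A (Ψ σ) B) '' verticalClosedStrip 0 1) := by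
    obtain ⟨C, hC⟩ := isBigO_principal.1
      (isBigO_petzInterpolant_one (p := p) (Φ := Φ) (σ := σ) (A := A) (ω := Ψ σ) (B := B))
    exact ⟨C, Set.forall_mem_image.2 fun z hz => by simpa using hC z hz⟩
  have hthree := norm_le_interp_of_mem_verticalClosedStrip₀₁'
    (petzInterpolant p Φ σ A (Ψ σ) B) (z := (p⁻¹ : ℝ))
    ⟨by simpa using hp0.le, by simpa using inv_le_one_of_one_le₀ hp⟩
    differentiable_petzInterpolant.diffContOnCl hbdd
    (fun z hz => by
      rw [show z = z.im * Complex.I from Complex.ext (by simpa using hz) (by simp)]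
      exact norm_petzInterpolant_mul_I_le hA z.im)
    (fun z hz => by
      rw [show z = 1 + z.im * Complex.I from Complex.ext (by simpa using hz) (by simp)]
      exact norm_petzInterpolant_one_add_mul_I_le hΨ hσ hω hB z.im)
  rw [petzInterpolant_inv hp0.ne' hσ hω hA hB, Complex.ofReal_re] at hthree
  exact (Complex.re_le_norm _).trans hthree

end Interpolation

end Matrix

section Perturbation

open scoped Matrix.Norms.L2Operator MatrixOrder NNReal

theorem continuousOn_rpow_Ici {A : Type*} [CStarAlgebra A] [PartialOrder A] [StarOrderedRing A]
    {t : ℝ} (ht : 0 ≤ t) : ContinuousOn (fun a : A => a ^ t) (Set.Ici 0) := by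
  simp only [CFC.rpow_def]
  exact ContinuousOn.cfc_nnreal_of_mem_nhdsSet (s := Set.univ) _ (by simp) continuousOn_id
    (fun _ ha => ha) (NNReal.continuous_rpow_const ht).continuousOn

variable {n m : Type*} [Fintype m] [DecidableEq n]

/-- The perturbation `X ↦ Φ X + ε Tr(X) 1` of a positive map, which for `ε > 0` maps strictly
positive matrices to strictly positive ones. -/
noncomputable def addTrace (ε : ℝ≥0) (Φ : Matrix m m ℂ →ₚ[ℂ] Matrix n n ℂ) :
    Matrix m m ℂ →ₚ[ℂ] Matrix n n ℂ :=
  .mk₀ (Φ.toLinearMap + ((ε : ℂ) • traceLinearMap m ℂ ℂ).smulRight 1) fun X hX =>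
    have htr : 0 ≤ ε * X.trace :=
      mul_nonneg (by positivity) (Matrix.nonneg_iff_posSemidef.1 hX).trace_nonneg
    add_nonneg (Φ.map_nonneg hX) (PosSemidef.one.smul htr).nonneg

theorem addTrace_apply (ε : ℝ≥0) (Φ : Matrix m m ℂ →ₚ[ℂ] Matrix n n ℂ) (X : Matrix m m ℂ) :
    addTrace ε Φ X = Φ X + (ε * X.trace) • 1 := rfl

theorem continuous_addTrace (Φ : Matrix m m ℂ →ₚ[ℂ] Matrix n n ℂ) {X : ℝ≥0 → Matrix m m ℂ}
    (hX : Continuous X) : Continuous fun ε => addTrace ε Φ (X ε) := by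
  have hΦ : Continuous Φ := Φ.toLinearMap.continuous_of_finiteDimensional
  simp only [addTrace_apply]
  fun_prop

variable [Fintype n] [DecidableEq m]

theorem IsTraceAdjoint.addTrace {Φ : Matrix m m ℂ →ₚ[ℂ] Matrix n n ℂ}
    {Ψ : Matrix n n ℂ →ₚ[ℂ] Matrix m m ℂ} (h : IsTraceAdjoint Φ Ψ) (ε : ℝ≥0) :
    IsTraceAdjoint (addTrace ε Φ) (addTrace ε Ψ) := fun A B => by
  simp [addTrace_apply, add_mul, mul_add, h A B, mul_left_comm, mul_comm]

theorem isStrictlyPositive_addTrace [Nonempty m] {ε : ℝ≥0} (hε : 0 < ε)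
    (Φ : Matrix m m ℂ →ₚ[ℂ] Matrix n n ℂ) {X : Matrix m m ℂ} (hX : IsStrictlyPositive X) :
    IsStrictlyPositive (addTrace ε Φ X) := by
  have htr : 0 < X.trace := (Matrix.isStrictlyPositive_iff_posDef.1 hX).trace_pos
  have hpos : 0 < (ε : ℂ) * X.trace := by positivity
  exact .nonneg_add (Φ.map_nonneg hX.nonneg)
    (Matrix.isStrictlyPositive_iff_posDef.2 (PosDef.one.smul hpos))

theorem continuous_sandwichedTrace {X : Type*} [TopologicalSpace X] {p : ℝ} (hp : 0 ≤ p)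
    {S T : X → Matrix n n ℂ} (hS : Continuous S) (hS0 : ∀ x, 0 ≤ S x) (hT : Continuous T)
    (hT0 : ∀ x, 0 ≤ T x) : Continuous fun x => sandwichedTrace p (S x) (T x) := by
  have htrace : Continuous (trace : Matrix n n ℂ → ℂ) := by fun_prop
  have hSpow : Continuous fun x => S x ^ (1 / (2 * p)) :=
    (continuousOn_rpow_Ici (by positivity)).comp_continuous hS hS0
  exact (Complex.continuous_re.comp htrace).comp <|
    (continuousOn_rpow_Ici hp).comp_continuous ((hSpow.mul hT).mul hSpow) fun x =>
      CFC.rpow_nonneg.isSelfAdjoint.conjugate_nonneg (hT0 x)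

theorem sandwichedTrace_addTrace_le [Nonempty n] [Nonempty m] {p : ℝ} (hp : 1 ≤ p)
    {Φ : Matrix m m ℂ →ₚ[ℂ] Matrix n n ℂ} {Ψ : Matrix n n ℂ →ₚ[ℂ] Matrix m m ℂ}
    (hΨ : IsTraceAdjoint Φ Ψ) {σ : Matrix n n ℂ} {b : Matrix m m ℂ} (hσ : 0 ≤ σ) (hb : 0 ≤ b)
    {ε : ℝ≥0} (hε : 0 < ε) :
    sandwichedTrace p (σ + ε • 1) (addTrace ε Φ (b + ε • 1)) ≤
      ‖addTrace ε Φ 1‖ ^ (p - 1) *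
        sandwichedTrace p (addTrace ε Ψ (σ + ε • 1)) (b + ε • 1) := by
  have hσpos : IsStrictlyPositive (σ + ε • 1) :=
    .nonneg_add hσ (IsStrictlyPositive.smul hε isStrictlyPositive_one)
  have hbpos : IsStrictlyPositive (b + ε • 1) :=
    .nonneg_add hb (IsStrictlyPositive.smul hε isStrictlyPositive_one)
  exact sandwichedTrace_le_of_isStrictlyPositive hp (hΨ.addTrace ε) hσpos
    (isStrictlyPositive_addTrace hε Ψ hσpos) hbpos (isStrictlyPositive_addTrace hε Φ hbpos)

theorem sandwichedTrace_le_of_nonempty [Nonempty n] [Nonempty m] {p : ℝ} (hp : 1 ≤ p)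
    {Φ : Matrix m m ℂ →ₚ[ℂ] Matrix n n ℂ} {Ψ : Matrix n n ℂ →ₚ[ℂ] Matrix m m ℂ}
    (hΨ : IsTraceAdjoint Φ Ψ) {σ : Matrix n n ℂ} {b : Matrix m m ℂ} (hσ : 0 ≤ σ) (hb : 0 ≤ b) :
    sandwichedTrace p σ (Φ b) ≤ ‖Φ 1‖ ^ (p - 1) * sandwichedTrace p (Ψ σ) b := by
  have hp0 : 0 ≤ p := by positivity
  have hσε (ε : ℝ≥0) : 0 ≤ σ + ε • 1 := add_nonneg hσ (smul_nonneg ε.2 zero_le_one)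
  have hbε (ε : ℝ≥0) : 0 ≤ b + ε • 1 := add_nonneg hb (smul_nonneg ε.2 zero_le_one)
  have hσcont : Continuous fun ε : ℝ≥0 => σ + ε • 1 := by fun_prop
  have hbcont : Continuous fun ε : ℝ≥0 => b + ε • 1 := by fun_prop
  have hlhs := continuous_sandwichedTrace hp0 hσcont hσε (continuous_addTrace Φ hbcont)
    fun ε => (addTrace ε Φ).map_nonneg (hbε ε)
  have hrhs := continuous_sandwichedTrace hp0 (continuous_addTrace Ψ hσcont)
    (fun ε => (addTrace ε Ψ).map_nonneg (hσε ε)) hbcont hbε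
  have hnorm : Continuous fun ε : ℝ≥0 => ‖addTrace ε Φ 1‖ ^ (p - 1) :=
    (continuous_addTrace Φ continuous_const).norm.rpow_const fun _ => .inr (sub_nonneg.2 hp)
  have hzero := le_on_closure (s := Set.Ioi 0)
    (fun ε hε => sandwichedTrace_addTrace_le hp hΨ hσ hb hε)
    hlhs.continuousOn (hnorm.mul hrhs).continuousOn
    (x := 0) (by rw [closure_Ioi]; exact Set.self_mem_Ici)
  simpa [addTrace_apply] using hzero

theorem sandwichedTrace_zero {p : ℝ} (hp : p ≠ 0) (σ : Matrix n n ℂ) :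
    sandwichedTrace p σ 0 = 0 := by
  have hzero : (0 : Matrix n n ℂ) ^ p = 0 := CFC.zero_rpow hp
  simp [sandwichedTrace, hzero]

theorem sandwichedTrace_le {p : ℝ} (hp : 1 ≤ p) {Φ : Matrix m m ℂ →ₚ[ℂ] Matrix n n ℂ}
    {Ψ : Matrix n n ℂ →ₚ[ℂ] Matrix m m ℂ} (hΨ : IsTraceAdjoint Φ Ψ) {σ : Matrix n n ℂ}
    {b : Matrix m m ℂ} (hσ : 0 ≤ σ) (hb : 0 ≤ b) :
    sandwichedTrace p σ (Φ b) ≤ ‖Φ 1‖ ^ (p - 1) * sandwichedTrace p (Ψ σ) b := by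
  have hp0 : p ≠ 0 := by positivity
  rcases isEmpty_or_nonempty n with _ | _
  · calc sandwichedTrace p σ (Φ b) = 0 := by simp [sandwichedTrace, trace_eq_zero_of_isEmpty]
      _ ≤ _ := mul_nonneg (by positivity) (sandwichedTrace_nonneg _ _ _)
  rcases isEmpty_or_nonempty m with _ | _
  · simp [Subsingleton.elim b 0, sandwichedTrace_zero hp0]
  exact sandwichedTrace_le_of_nonempty hp hΨ hσ hb

theorem mpow_eq_rpow {A : Matrix n n ℂ} (hA : 0 ≤ A) (t : ℝ) : mpow A t = A ^ t := by
  have hH : A.IsHermitian := (Matrix.nonneg_iff_posSemidef.1 hA).isHermitian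
  rw [CFC.rpow_eq_cfc_real hA, hH.cfc_eq, IsHermitian.cfc, Unitary.conjStarAlgAut_apply, mpow,
    dif_pos hH]
  rfl

theorem trace_mpow_eq_sandwichedTrace (p : ℝ) {σ B : Matrix n n ℂ} (hσ : 0 ≤ σ) (hB : 0 ≤ B) :
    (mpow (mpow σ (1 / (2 * p)) * B * mpow σ (1 / (2 * p))) p).trace.re =
      sandwichedTrace p σ B := by
  have hconj : 0 ≤ σ ^ (1 / (2 * p)) * B * σ ^ (1 / (2 * p)) :=
    CFC.rpow_nonneg.isSelfAdjoint.conjugate_nonneg hB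
  rw [mpow_eq_rpow hσ, mpow_eq_rpow hconj, sandwichedTrace]

theorem trace_mpow_petz_recovery_ineq_general {p : ℝ} (hp : 1 ≤ p)
    (Φ : Matrix m m ℂ →ₗ[ℂ] Matrix n n ℂ) {c : ℝ≥0} (hΦ1 : (c • 1 - Φ 1).PosSemidef)
    (hΦpos : ∀ B : Matrix m m ℂ, B.PosSemidef → (Φ B).PosSemidef)
    (Ψ : Matrix n n ℂ →ₗ[ℂ] Matrix m m ℂ) (hΨ : ∀ A B, (Ψ A * B).trace = (A * Φ B).trace)
    {σ : Matrix n n ℂ} (hσ : σ.PosSemidef) {b : Matrix m m ℂ} (hb : b.PosSemidef) :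
    (mpow (mpow σ (1 / (2 * p)) * Φ b * mpow σ (1 / (2 * p))) p).trace.re ≤
      c ^ (p - 1) *
        (mpow (mpow (Ψ σ) (1 / (2 * p)) * b * mpow (Ψ σ) (1 / (2 * p))) p).trace.re := by
  let Φ' : Matrix m m ℂ →ₚ[ℂ] Matrix n n ℂ := .mk₀ Φ fun B hB =>
    (hΦpos B (Matrix.nonneg_iff_posSemidef.1 hB)).nonneg
  have hΨ' : IsTraceAdjoint Φ' Ψ := hΨ
  let Ψ' : Matrix n n ℂ →ₚ[ℂ] Matrix m m ℂ := .mk₀ Ψ fun A hA => hΨ'.map_nonneg hA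
  have hΦb : 0 ≤ Φ b := Φ'.map_nonneg hb.nonneg
  have hΨσ : 0 ≤ Ψ σ := Ψ'.map_nonneg hσ.nonneg
  have hnorm : ‖Φ' 1‖ ≤ c := by
    refine (CStarAlgebra.norm_le_iff_le_algebraMap _ c.2 (Φ'.map_nonneg zero_le_one)).2 ?_
    rw [Algebra.algebraMap_eq_smul_one]
    exact Matrix.le_iff.2 hΦ1
  rw [trace_mpow_eq_sandwichedTrace p hσ.nonneg hΦb, trace_mpow_eq_sandwichedTrace p hΨσ hb.nonneg]
  calc sandwichedTrace p σ (Φ b) ≤ ‖Φ' 1‖ ^ (p - 1) * sandwichedTrace p (Ψ σ) b :=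
        sandwichedTrace_le hp (Φ := Φ') (Ψ := Ψ') hΨ' hσ.nonneg hb.nonneg
    _ ≤ c ^ (p - 1) * sandwichedTrace p (Ψ σ) b := by
      gcongr
      exact sandwichedTrace_nonneg _ _ _

end Perturbation

/-- Key trace inequality behind the DPI: if `Φ` is unital and positive, `Ψ` is its
trace-adjoint, `σ ≥ 0` and `b ≥ 0` with `supp b ⊆ supp Ψ(σ)`, then for `p ≥ 1`:
`Tr((σ^{1/2p} Φ(b) σ^{1/2p})^p) ≤ Tr((Ψ(σ)^{1/2p} b Ψ(σ)^{1/2p})^p)`. -/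
theorem trace_mpow_petz_recovery_ineq (n m : ℕ) (p : ℝ) (hp : 1 ≤ p)
    (Φ : Matrix (Fin m) (Fin m) ℂ →ₗ[ℂ] Matrix (Fin n) (Fin n) ℂ)
    (hΦ1 : Φ 1 = 1)
    (hΦpos : ∀ B : Matrix (Fin m) (Fin m) ℂ, B.PosSemidef → (Φ B).PosSemidef)
    (Ψ : Matrix (Fin n) (Fin n) ℂ →ₗ[ℂ] Matrix (Fin m) (Fin m) ℂ)
    (hΨ : ∀ (A : Matrix (Fin n) (Fin n) ℂ) (B : Matrix (Fin m) (Fin m) ℂ),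
      (Ψ A * B).trace = (A * Φ B).trace)
    (σ : Matrix (Fin n) (Fin n) ℂ) (hσ : σ.PosSemidef)
    (b : Matrix (Fin m) (Fin m) ℂ) (hb : b.PosSemidef)
    (hsupp : ∀ v : Fin m → ℂ, (Ψ σ) *ᵥ v = 0 → b *ᵥ v = 0) :
    ((mpow (mpow σ (1 / (2 * p)) * Φ b * mpow σ (1 / (2 * p))) p).trace).re
      ≤ ((mpow (mpow (Ψ σ) (1 / (2 * p)) * b * mpow (Ψ σ) (1 / (2 * p))) p).trace).re := by
  simpa using trace_mpow_petz_recovery_ineq_general (c := 1) hp Φ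
    (by simp [hΦ1, PosSemidef.zero]) hΦpos Ψ hΨ hσ hb
end
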